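/- Let N ≥ 3 be odd. Let u₀, u₁ ∈ C_c^∞(ℝ^N) and let u : ℝ × ℝ^N → ℝ be a smooth solution of the linear wave equation ∂_t²u = Δ_x u with u(0,·) = u₀ and ∂_t u(0,·) = u₁. Define the exterior energy Ext(t) = (1/2)∫_{|x| ≥ |t|} (|∇_x u(t,x)|² + (∂_t u(t,x))²) dx. Then there exist real numbers E₊ and E₋ such that Ext(t) → E₊ as t → +∞, Ext(t) → E₋ as t → −∞, and E₊ + E₋ = (1/2)∫_{ℝ^N}|∇u₀|² dx + (1/2)∫_{ℝ^N}u₁² dx. -/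

import Mathlib

open MeasureTheory Metric Filter Set

noncomputable section

/-- The ground state `W(x) = (1 + |x|²/(N(N-2)))^(-(N-2)/2)`. -/
def W (N : ℕ) (x : EuclideanSpace ℝ (Fin N)) : ℝ :=
  (1 + ‖x‖ ^ 2 / ((N : ℝ) * ((N : ℝ) - 2))) ^ (-(((N : ℝ) - 2) / 2))

/-- The energy `E(v₀,v₁)`. -/
def energy (N : ℕ) (v₀ v₁ : EuclideanSpace ℝ (Fin N) → ℝ) : ℝ :=
  (1 / 2) * (∫ x, v₁ x ^ 2)
    + (1 / 2) * (∫ x, ‖gradient v₀ x‖ ^ 2)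
    - ((N : ℝ) - 2) / (2 * (N : ℝ)) * (∫ x, |v₀ x| ^ (2 * (N : ℝ) / ((N : ℝ) - 2)))

/-- The first coordinate of a point of `ℝ^N`. -/
def firstCoord {N : ℕ} (x : EuclideanSpace ℝ (Fin N)) : ℝ :=
  if h : 0 < N then x ⟨0, h⟩ else 0

/-- The Lorentz-transformed ground state `W_ℓ(t,x)`; the sum `x₂² + ⋯ + x_N²` is written
as `‖x‖² - x₁²`. -/
def Wl (N : ℕ) (ℓ : ℝ) (t : ℝ) (x : EuclideanSpace ℝ (Fin N)) : ℝ :=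
  (1 + (firstCoord x - t * ℓ) ^ 2 / ((N : ℝ) * ((N : ℝ) - 2) * (1 - ℓ ^ 2))
     + (‖x‖ ^ 2 - firstCoord x ^ 2) / ((N : ℝ) * ((N : ℝ) - 2))) ^ (-(((N : ℝ) - 2) / 2))

/-- The time derivative `∂ₜ W_ℓ(t,x)`. -/
def dtWl (N : ℕ) (ℓ : ℝ) (t : ℝ) (x : EuclideanSpace ℝ (Fin N)) : ℝ :=
  deriv (fun s => Wl N ℓ s x) t

/-- The second partial derivative `∂²f/∂xⱼ²` at `x`. -/
def d2 {N : ℕ} (f : EuclideanSpace ℝ (Fin N) → ℝ) (j : Fin N)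
    (x : EuclideanSpace ℝ (Fin N)) : ℝ :=
  fderiv ℝ (fun y => fderiv ℝ f y (EuclideanSpace.single j 1)) x (EuclideanSpace.single j 1)
/-- the coordinate directions of space-time; `none` is the time direction. -/
def stdir {N : ℕ} : Option (Fin N) → ℝ × EuclideanSpace ℝ (Fin N)
  | none => (1, 0)
  | some j => (0, EuclideanSpace.single j 1)

/-- (twice) the energy density. -/
def edens {N : ℕ} (U : ℝ × EuclideanSpace ℝ (Fin N) → ℝ) (p : ℝ × EuclideanSpace ℝ (Fin N)) : ℝ :=
  ∑ μ, (fderiv ℝ U p (stdir μ)) ^ 2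

/-- smooth solutions of the wave equation on space-time. -/
def IsWaveSol {N : ℕ} (U : ℝ × EuclideanSpace ℝ (Fin N) → ℝ) : Prop :=
  ContDiff ℝ (⊤ : ℕ∞) U ∧ ∀ p, fderiv ℝ (fun q => fderiv ℝ U q (stdir none)) p (stdir none)
    = ∑ j, fderiv ℝ (fun q => fderiv ℝ U q (stdir (some j))) p (stdir (some j))

lemma smooth_dir {V : Type*} [NormedAddCommGroup V] [NormedSpace ℝ V] {U : V → ℝ}
    (hU : ContDiff ℝ (⊤ : ℕ∞) U) (v : V) :
    ContDiff ℝ (⊤ : ℕ∞) (fun q => fderiv ℝ U q v) :=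
  (hU.fderiv_right (m := (⊤ : ℕ∞)) (by norm_cast)).clm_apply contDiff_const

lemma smooth_diff {V : Type*} [NormedAddCommGroup V] [NormedSpace ℝ V] {U : V → ℝ}
    (hU : ContDiff ℝ (⊤ : ℕ∞) U) : Differentiable ℝ U := hU.differentiable (by simp)

lemma smooth_swap {V : Type*} [NormedAddCommGroup V] [NormedSpace ℝ V] {U : V → ℝ}
    (hU : ContDiff ℝ (⊤ : ℕ∞) U) (v w p : V) :
    fderiv ℝ (fun q => fderiv ℝ U q v) p w = fderiv ℝ (fun q => fderiv ℝ U q w) p v := by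
  have h1 : ∀ v w, fderiv ℝ (fun q => fderiv ℝ U q v) p w = fderiv ℝ (fderiv ℝ U) p w v := by
    intro v w
    have hd : DifferentiableAt ℝ (fderiv ℝ U) p :=
      ((hU.fderiv_right (m := (⊤ : ℕ∞)) (by norm_cast)).differentiable (by simp)) p
    rw [fderiv_clm_apply hd (differentiableAt_const v)]
    simp
  rw [h1, h1]
  have := (hU.contDiffAt (x := p)).isSymmSndFDerivAt
    (by simp only [minSmoothness_of_isRCLikeNormedField]
        exact WithTop.coe_le_coe.2 (le_top : (2 : ℕ∞) ≤ ⊤))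
  exact this w v

lemma hasFDerivAt_setIntegral_compact {P E G : Type*} [NormedAddCommGroup P] [NormedSpace ℝ P]
    [ProperSpace P] [NormedAddCommGroup E] [MeasurableSpace E] [BorelSpace E]
    [SecondCountableTopology E]
    [NormedAddCommGroup G] [NormedSpace ℝ G] (μ : Measure E)
    [IsFiniteMeasureOnCompacts μ]
    {F : P → E → G} {F' : P → E → P →L[ℝ] G} {K : Set E} (hK : IsCompact K)
    (hF : Continuous (Function.uncurry F)) (hF' : Continuous (Function.uncurry F'))
    (h : ∀ p y, HasFDerivAt (fun q => F q y) (F' p y) p) (p₀ : P) :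
    HasFDerivAt (fun p => ∫ y in K, F p y ∂μ) (∫ y in K, F' p₀ y ∂μ) p₀ := by
  have hcomp : IsCompact (closedBall p₀ 1 ×ˢ K) := (isCompact_closedBall p₀ 1).prod hK
  obtain ⟨C, hC⟩ := hcomp.exists_bound_of_continuousOn hF'.continuousOn
  have c1 : ∀ p, Continuous (F p) := fun p => hF.comp (by fun_prop : Continuous fun y => (p, y))
  have c2 : ∀ p, Continuous (F' p) := fun p => hF'.comp (by fun_prop : Continuous fun y => (p, y))
  have hfin : IsFiniteMeasure (μ.restrict K) := ⟨by simpa using hK.measure_lt_top⟩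
  refine hasFDerivAt_integral_of_dominated_of_fderiv_le (s := closedBall p₀ 1)
    (bound := fun _ => C) (F := F) (F' := F')
    (closedBall_mem_nhds p₀ one_pos) ?_ ?_ ?_ ?_ (integrable_const C) ?_
  · exact Eventually.of_forall fun p => (c1 p).continuousOn.aestronglyMeasurable_of_isCompact
      hK hK.measurableSet
  · exact (c1 p₀).continuousOn.integrableOn_compact hK
  · exact (c2 p₀).continuousOn.aestronglyMeasurable_of_isCompact hK hK.measurableSet
  · filter_upwards [ae_restrict_mem hK.measurableSet] with y hy p hp
    exact hC (p, y) ⟨hp, hy⟩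
  · exact Eventually.of_forall fun y p _ => h p y

/-- derivative of a spatial slice -/
lemma fderiv_slice {N : ℕ} {h : ℝ × EuclideanSpace ℝ (Fin N) → ℝ} (hh : Differentiable ℝ h)
    (t : ℝ) (x v : EuclideanSpace ℝ (Fin N)) :
    fderiv ℝ (fun y => h (t, y)) x v = fderiv ℝ h (t, x) (0, v) := by
  have h1 : HasFDerivAt (fun y : EuclideanSpace ℝ (Fin N) => (t, y))
      (ContinuousLinearMap.inr ℝ ℝ (EuclideanSpace ℝ (Fin N))) x :=
    hasFDerivAt_prodMk_right t x
  have := ((hh (t, x)).hasFDerivAt.comp x h1).fderiv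
  rw [Function.comp_def] at this
  rw [this]
  simp

lemma deriv_slice {N : ℕ} {h : ℝ × EuclideanSpace ℝ (Fin N) → ℝ} (hh : Differentiable ℝ h)
    (t : ℝ) (x : EuclideanSpace ℝ (Fin N)) :
    HasDerivAt (fun s => h (s, x)) (fderiv ℝ h (t, x) (1, 0)) t := by
  have h1 : HasFDerivAt (fun y : ℝ => (y, x))
      (ContinuousLinearMap.inl ℝ ℝ (EuclideanSpace ℝ (Fin N))) t :=
    hasFDerivAt_prodMk_left t x
  have := ((hh (t, x)).hasFDerivAt.comp t h1).hasDerivAt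
  simpa [Function.comp_def] using this

lemma integral_slice_zero {N : ℕ} {h : ℝ × EuclideanSpace ℝ (Fin N) → ℝ}
    (hh : ContDiff ℝ 1 h) (t : ℝ) (hs : HasCompactSupport (fun y => h (t, y)))
    (v : EuclideanSpace ℝ (Fin N)) :
    Integrable (fun x => fderiv ℝ h (t, x) (0, v)) ∧ ∫ x, fderiv ℝ h (t, x) (0, v) = 0 := by
  have hd : Differentiable ℝ h := hh.differentiable (by simp)
  have hsl : ContDiff ℝ 1 (fun y => h (t, y)) := hh.comp (by fun_prop)
  have e : (fun x => fderiv ℝ h (t, x) (0, v)) = fun x => fderiv ℝ (fun y => h (t, y)) x v := by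
    ext x; rw [fderiv_slice hd]
  rw [e]
  have hc : Continuous (fun x => fderiv ℝ (fun y => h (t, y)) x v) :=
    (hsl.continuous_fderiv (by simp)).clm_apply continuous_const
  have hcs : HasCompactSupport (fun x => fderiv ℝ (fun y => h (t, y)) x v) :=
    hs.fderiv_apply ℝ v
  have hi := hc.integrable_of_hasCompactSupport hcs (μ := volume)
  refine ⟨hi, ?_⟩
  have := integral_mul_fderiv_eq_neg_fderiv_mul_of_integrable (μ := volume)
    (f := fun _ : EuclideanSpace ℝ (Fin N) => (1 : ℝ)) (g := fun y => h (t, y)) (v := v)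
    (by simp) (by simpa using hi)
    (by simpa using hsl.continuous.integrable_of_hasCompactSupport hs)
    (fun x _ => differentiableAt_const _) (fun x _ => hsl.differentiable (by simp) x)
  simpa using this

lemma edens_nonneg {N : ℕ} (U : ℝ × EuclideanSpace ℝ (Fin N) → ℝ) (p) : 0 ≤ edens U p :=
  Finset.sum_nonneg fun _ _ => sq_nonneg _

lemma edens_smooth {N : ℕ} {U : ℝ × EuclideanSpace ℝ (Fin N) → ℝ}
    (hU : ContDiff ℝ (⊤ : ℕ∞) U) : ContDiff ℝ (⊤ : ℕ∞) (edens U) := by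
  unfold edens
  exact ContDiff.sum fun μ _ => (smooth_dir hU _).pow 2

/-- the smooth weight -/
def jb {N : ℕ} (x : EuclideanSpace ℝ (Fin N)) : ℝ := Real.sqrt (1 + ‖x‖ ^ 2)

lemma jb_smooth {N : ℕ} : ContDiff ℝ (⊤ : ℕ∞) (jb (N := N)) := by
  unfold jb
  exact ContDiff.sqrt (contDiff_const.add (contDiff_norm_sq ℝ)) (fun x => by positivity)

lemma jb_ge {N : ℕ} (x : EuclideanSpace ℝ (Fin N)) : ‖x‖ ≤ jb x :=
  Real.le_sqrt_of_sq_le (by linarith)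

lemma jb_fderiv {N : ℕ} (x v : EuclideanSpace ℝ (Fin N)) :
    fderiv ℝ (jb (N := N)) x v = inner ℝ x v / jb x := by
  have h1 : HasFDerivAt (fun y : EuclideanSpace ℝ (Fin N) => 1 + ‖y‖ ^ 2) (2 • (innerSL ℝ x)) x :=
    (hasStrictFDerivAt_norm_sq x).hasFDerivAt.const_add 1
  have h2 := (h1.sqrt (by positivity)).fderiv
  unfold jb
  rw [h2]
  simp
  field_simp

/-- space-time cut-off -/
def cutoff {N : ℕ} (T : ℝ) (p : ℝ × EuclideanSpace ℝ (Fin N)) : ℝ :=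
  Real.smoothTransition (T - p.1 - jb p.2)

lemma cutoff_smooth {N : ℕ} (T : ℝ) : ContDiff ℝ (⊤ : ℕ∞) (cutoff (N := N) T) := by
  unfold cutoff
  exact Real.smoothTransition.contDiff.comp
    ((contDiff_const.sub contDiff_fst).sub (jb_smooth.comp contDiff_snd))

lemma cutoff_zero {N : ℕ} {T : ℝ} {p : ℝ × EuclideanSpace ℝ (Fin N)} (h : T - p.1 ≤ ‖p.2‖) :
    cutoff T p = 0 :=
  Real.smoothTransition.zero_of_nonpos (by have := jb_ge p.2; linarith)

lemma cutoff_fderiv {N : ℕ} (T : ℝ) (p : ℝ × EuclideanSpace ℝ (Fin N)) :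
    ∃ c : ℝ, 0 ≤ c ∧ ∀ v, fderiv ℝ (cutoff T) p v = c * (- v.1 - inner ℝ p.2 v.2 / jb p.2) := by
  refine ⟨deriv Real.smoothTransition (T - p.1 - jb p.2),
    Real.smoothTransition.monotone.deriv_nonneg, fun v => ?_⟩
  have hjb : HasFDerivAt (fun q : ℝ × EuclideanSpace ℝ (Fin N) => jb q.2)
      ((fderiv ℝ (jb (N := N)) p.2).comp (ContinuousLinearMap.snd ℝ ℝ _)) p :=
    ((smooth_diff jb_smooth) p.2).hasFDerivAt.comp p hasFDerivAt_snd
  have h1 := ((hasFDerivAt_fst (𝕜 := ℝ) (p := p)).const_sub T).sub hjb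
  have h2 : HasDerivAt Real.smoothTransition (deriv Real.smoothTransition (T - p.1 - jb p.2))
      (T - p.1 - jb p.2) :=
    ((Real.smoothTransition.contDiff (n := 1)).differentiable (by simp) _).hasDerivAt
  have h3 := (h2.comp_hasFDerivAt p h1).fderiv
  have h4 : (Real.smoothTransition ∘ fun q : ℝ × EuclideanSpace ℝ (Fin N) => T - q.1 - jb q.2)
    = cutoff T := rfl
  rw [show fderiv ℝ (cutoff T) p = _ from h3]
  simp [jb_fderiv]

lemma energy_pointwise {N : ℕ} {U : ℝ × EuclideanSpace ℝ (Fin N) → ℝ} (hU : IsWaveSol U) (T : ℝ)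
    (p : ℝ × EuclideanSpace ℝ (Fin N)) :
    fderiv ℝ (fun q => cutoff T q * edens U q) p (stdir none) ≤
      ∑ j, fderiv ℝ (fun q => cutoff T q * (2 * fderiv ℝ U q (stdir none) *
        fderiv ℝ U q (stdir (some j)))) p (stdir (some j)) := by
  obtain ⟨hs, hw⟩ := hU
  obtain ⟨c, hc, hcd⟩ := cutoff_fderiv T p
  have dC := (smooth_diff (cutoff_smooth (N := N) T) p).hasFDerivAt
  have dU : ∀ μ, HasFDerivAt (fun q => fderiv ℝ U q (stdir μ)) _ p :=
    fun μ => (smooth_diff (smooth_dir hs (stdir μ)) p).hasFDerivAt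
  have dE : HasFDerivAt (edens U) (∑ μ, (2 * fderiv ℝ U p (stdir μ)) •
      fderiv ℝ (fun q => fderiv ℝ U q (stdir μ)) p) p := by
    unfold edens
    refine HasFDerivAt.fun_sum fun μ _ => ?_
    simpa using (dU μ).pow 2
  have e1 := (dC.mul dE).fderiv
  have e2 := fun j => (dC.mul (((dU none).const_mul 2).mul (dU (some j)))).fderiv
  rw [show fderiv ℝ (fun q => cutoff T q * edens U q) p = _ from e1]
  have e2' : ∀ j, fderiv ℝ (fun q => cutoff T q * (2 * fderiv ℝ U q (stdir none) *
        fderiv ℝ U q (stdir (some j)))) p = _ := e2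
  simp only [e2']
  simp only [_root_.add_apply, _root_.smul_apply, smul_eq_mul,
    _root_.sum_apply, hcd, edens, Fintype.sum_option, hw]
  have hsw : ∀ j, fderiv ℝ (fun q => fderiv ℝ U q (stdir (some j))) p (stdir none) =
    fderiv ℝ (fun q => fderiv ℝ U q (stdir none)) p (stdir (some j)) :=
    fun j => smooth_swap hs _ _ _
  simp only [hsw]
  set A := fderiv ℝ U p (stdir none)
  set B := fun j => fderiv ℝ U p (stdir (some j)) with hB
  set M := fun j => fderiv ℝ (fun q => fderiv ℝ U q (stdir (some j))) p (stdir (some j))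
  set L := fun j => fderiv ℝ (fun q => fderiv ℝ U q (stdir none)) p (stdir (some j))
  have hjpos : 0 < jb p.2 := Real.sqrt_pos.2 (by positivity)
  set a := fun j => p.2 j / jb p.2 with ha
  have ha1 : ∑ j, a j ^ 2 ≤ 1 := by
    simp only [ha, div_pow, ← Finset.sum_div]
    rw [div_le_one (by positivity), ← EuclideanSpace.real_norm_sq_eq, jb,
      Real.sq_sqrt (by positivity)]
    linarith
  have key : 2 * A * ∑ j, a j * B j ≤ A ^ 2 + ∑ j, B j ^ 2 := by
    have : ∑ j, 2 * (A * (a j * B j)) ≤ ∑ j, (A ^ 2 * a j ^ 2 + B j ^ 2) :=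
      Finset.sum_le_sum fun j _ => by nlinarith [sq_nonneg (A * a j - B j)]
    rw [Finset.sum_add_distrib, ← Finset.mul_sum, ← Finset.mul_sum, ← Finset.mul_sum] at this
    nlinarith [sq_nonneg A]
  have hdir : ∀ j, c * (-(stdir (N := N) (some j)).1 -
      inner ℝ p.2 (stdir (N := N) (some j)).2 / jb p.2) = - c * a j := by
    intro j
    simp [stdir, ha, EuclideanSpace.inner_single_right]
  have hdir0 : c * (-(stdir (N := N) none).1 -
      inner ℝ p.2 (stdir (N := N) none).2 / jb p.2) = - c := by
    simp [stdir]
  simp only [hdir, hdir0]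
  have expand : ∑ j, (cutoff T p * (2 * A * M j + B j * (2 * L j)) + 2 * A * B j * (-c * a j))
      = cutoff T p * (2 * A * ∑ j, M j + ∑ j, 2 * B j * L j) - c * (2 * A * ∑ j, a j * B j) := by
    simp only [Finset.mul_sum, mul_add, ← Finset.sum_add_distrib, ← Finset.sum_sub_distrib]
    refine Finset.sum_congr rfl fun j _ => by ring
  calc _ ≤ cutoff T p * (2 * A * ∑ j, M j + ∑ j, 2 * B j * L j) - c * (2 * A * ∑ j, a j * B j) := by
        have := mul_le_mul_of_nonneg_left key hc
        simp only [M, L] at *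
        linarith
    _ = _ := by rw [← expand]; rfl

lemma energy_cut_antitone {N : ℕ} {U : ℝ × EuclideanSpace ℝ (Fin N) → ℝ} (hU : IsWaveSol U)
    (T : ℝ) {t₀ t₁ : ℝ} (h : t₀ ≤ t₁) :
    ∫ x, cutoff T (t₁, x) * edens U (t₁, x) ≤ ∫ x, cutoff T (t₀, x) * edens U (t₀, x) := by
  have hG : ContDiff ℝ (⊤ : ℕ∞) (fun q => cutoff T q * edens U q) :=
    (cutoff_smooth T).mul (edens_smooth hU.1)
  set G := fun q => cutoff T q * edens U q with hGdef
  set K := closedBall (0 : EuclideanSpace ℝ (Fin N)) (T - t₀) with hKdef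
  have hK : IsCompact K := isCompact_closedBall _ _
  have hGd := smooth_diff hG
  have outside : ∀ t, t₀ ≤ t → ∀ x, x ∉ K → cutoff T (t, x) = 0 := by
    intro t ht x hx
    apply cutoff_zero
    simp [hKdef] at hx ⊢
    linarith
  have whole : ∀ t, t₀ ≤ t → ∫ x in K, G (t, x) = ∫ x, G (t, x) := by
    intro t ht
    apply setIntegral_eq_integral_of_forall_compl_eq_zero
    intro x hx
    simp [hGdef, outside t ht x hx]
  have hder : ∀ t, HasDerivAt (fun t => ∫ x in K, G (t, x))
      (∫ x in K, fderiv ℝ G (t, x) (stdir none)) t := by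
    intro t
    have := hasFDerivAt_setIntegral_compact volume (F := fun t x => G (t, x))
      (F' := fun t x => (fderiv ℝ G (t, x)).comp (ContinuousLinearMap.inl ℝ ℝ _)) hK
      (hG.continuous.comp (by fun_prop))
      (by
        have : Continuous (fderiv ℝ G) := hG.continuous_fderiv (by simp)
        exact (this.comp (by fun_prop)).clm_comp continuous_const)
      (fun s x => HasFDerivAt.comp (g := G) (f := fun e => (e, x)) s (hGd (s, x)).hasFDerivAt
        (hasFDerivAt_prodMk_left (𝕜 := ℝ) s x)) t
    have h2 := this.hasDerivAt
    rw [ContinuousLinearMap.integral_apply] at h2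
    · simpa [stdir] using h2
    · refine ContinuousOn.integrableOn_compact (K := K) hK ?_
      apply Continuous.continuousOn
      have : Continuous (fderiv ℝ G) := hG.continuous_fderiv (by simp)
      exact (this.comp (by fun_prop)).clm_comp continuous_const
  have hanti : AntitoneOn (fun t => ∫ x in K, G (t, x)) (Ici t₀) := by
    apply antitoneOn_of_deriv_nonpos (convex_Ici t₀)
    · exact fun t _ => (hder t).continuousAt.continuousWithinAt
    · exact fun t _ => (hder t).differentiableAt.differentiableWithinAt
    · intro t ht
      rw [interior_Ici] at ht
      have ht' : t₀ < t := ht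
      rw [(hder t).deriv]
      set H := fun (j : Fin N) q => cutoff T q * (2 * fderiv ℝ U q (stdir none) *
        fderiv ℝ U q (stdir (some j))) with hH
      have hHs : ∀ j, ContDiff ℝ (⊤ : ℕ∞) (H j) := fun j => (cutoff_smooth T).mul
        ((contDiff_const.mul (smooth_dir hU.1 _)).mul (smooth_dir hU.1 _))
      have hHc : ∀ j, HasCompactSupport (fun y => H j (t, y)) := by
        intro j
        apply HasCompactSupport.intro hK
        intro x hx
        simp [hH, outside t ht'.le x hx]
      have hz := fun j => integral_slice_zero ((hHs j).of_le (by exact_mod_cast le_top)) t (hHc j)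
        (EuclideanSpace.single j 1)
      have hGz : ∀ x, x ∉ K → fderiv ℝ G (t, x) (stdir none) = 0 := by
        intro x hx
        have h0 : (fun s => G (s, x)) =ᶠ[nhds t] fun _ => 0 := by
          filter_upwards [lt_mem_nhds ht'] with s hs
          simp [hGdef, outside s hs.le x hx]
        have := (deriv_slice hGd t x).deriv
        rw [h0.deriv_eq] at this
        simpa [stdir] using this.symm
      rw [setIntegral_eq_integral_of_forall_compl_eq_zero hGz]
      calc _ ≤ ∫ x, ∑ j, fderiv ℝ (H j) (t, x) (0, EuclideanSpace.single j 1) := by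
            apply integral_mono
            · have : HasCompactSupport fun x => fderiv ℝ G (t, x) (stdir none) :=
                HasCompactSupport.intro hK hGz
              refine Continuous.integrable_of_hasCompactSupport ?_ this
              exact (smooth_dir hG _).continuous.comp (by fun_prop)
            · exact integrable_finsetSum _ fun j _ => (hz j).1
            · intro x
              exact energy_pointwise hU T (t, x)
        _ = 0 := by
            rw [integral_finsetSum _ fun j _ => (hz j).1]
            exact Finset.sum_eq_zero fun j _ => (hz j).2
  have := hanti (mem_Ici.2 le_rfl) (mem_Ici.2 h) h
  simp only [whole t₀ le_rfl, whole t₁ h] at this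
  exact this

lemma cutoff_le_one {N : ℕ} (T : ℝ) (p : ℝ × EuclideanSpace ℝ (Fin N)) : cutoff T p ≤ 1 :=
  Real.smoothTransition.le_one _

lemma cutoff_nonneg {N : ℕ} (T : ℝ) (p : ℝ × EuclideanSpace ℝ (Fin N)) : 0 ≤ cutoff T p :=
  Real.smoothTransition.nonneg _

lemma energy_le_of_le {N : ℕ} {U : ℝ × EuclideanSpace ℝ (Fin N) → ℝ} (hU : IsWaveSol U)
    {s t : ℝ} (h : s ≤ t) :
    ∫⁻ x, ENNReal.ofReal (edens U (t, x)) ≤ ∫⁻ x, ENNReal.ofReal (edens U (s, x)) := by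
  have hc : ∀ T t, Continuous fun x : EuclideanSpace ℝ (Fin N) =>
      cutoff T (t, x) * edens U (t, x) := fun T t =>
    ((cutoff_smooth T).mul (edens_smooth hU.1)).continuous.comp (by fun_prop)
  have hIntg : ∀ T t, Integrable fun x : EuclideanSpace ℝ (Fin N) =>
      cutoff T (t, x) * edens U (t, x) := by
    intro T t
    refine (hc T t).integrable_of_hasCompactSupport ?_
    refine HasCompactSupport.intro (isCompact_closedBall 0 (T - t)) fun x hx => ?_
    rw [cutoff_zero, zero_mul]
    simp at hx ⊢
    linarith
  have hnn : ∀ T t, 0 ≤ fun x : EuclideanSpace ℝ (Fin N) => cutoff T (t, x) * edens U (t, x) :=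
    fun T t x => mul_nonneg (cutoff_nonneg _ _) (edens_nonneg _ _)
  have h1 : ∀ k : ℕ, ∫⁻ x, ENNReal.ofReal (cutoff (k : ℝ) (t, x) * edens U (t, x)) ≤
      ∫⁻ x, ENNReal.ofReal (edens U (s, x)) := by
    intro k
    rw [← ofReal_integral_eq_lintegral_ofReal (hIntg k t) (Eventually.of_forall (hnn k t))]
    refine (ENNReal.ofReal_le_ofReal (energy_cut_antitone hU k h)).trans ?_
    rw [ofReal_integral_eq_lintegral_ofReal (hIntg k s) (Eventually.of_forall (hnn k s))]
    refine lintegral_mono fun x => ENNReal.ofReal_le_ofReal ?_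
    exact mul_le_of_le_one_left (edens_nonneg _ _) (cutoff_le_one _ _)
  have h2 : ∀ x, ENNReal.ofReal (edens U (t, x)) =
      liminf (fun k : ℕ => ENNReal.ofReal (cutoff (k : ℝ) (t, x) * edens U (t, x))) atTop := by
    intro x
    refine (Tendsto.liminf_eq ?_).symm
    refine tendsto_const_nhds.congr' ?_
    obtain ⟨k₀, hk₀⟩ := exists_nat_ge (t + jb x + 1)
    filter_upwards [eventually_ge_atTop k₀] with k hk
    have : cutoff (k : ℝ) (t, x) = 1 := by
      apply Real.smoothTransition.one_of_one_le
      have : (k₀ : ℝ) ≤ k := by exact_mod_cast hk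
      simp only
      linarith
    rw [this, one_mul]
  simp_rw [h2]
  refine (lintegral_liminf_le (u := atTop) fun k : ℕ =>
    (ENNReal.continuous_ofReal.comp (hc k t)).measurable).trans ?_
  refine liminf_le_of_le (by isBoundedDefault) fun b hb => ?_
  obtain ⟨k, hk⟩ := hb.exists
  exact hk.trans (h1 k)

/-- time reversal -/
def trev (N : ℕ) : (ℝ × EuclideanSpace ℝ (Fin N)) →L[ℝ] (ℝ × EuclideanSpace ℝ (Fin N)) :=
  (-ContinuousLinearMap.fst ℝ ℝ (EuclideanSpace ℝ (Fin N))).prod (ContinuousLinearMap.snd ℝ ℝ _)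

/-- signs of the coordinate directions under time reversal -/
def tsgn {N : ℕ} : Option (Fin N) → ℝ
  | none => -1
  | some _ => 1

lemma trev_dir {N : ℕ} (μ : Option (Fin N)) : trev N (stdir μ) = tsgn μ • stdir μ := by
  cases μ <;> simp [trev, stdir, tsgn]

lemma tsgn_sq {N : ℕ} (μ : Option (Fin N)) : tsgn μ * tsgn μ = 1 := by
  cases μ <;> simp [tsgn]

lemma fderiv_trev {N : ℕ} {U : ℝ × EuclideanSpace ℝ (Fin N) → ℝ} (hU : Differentiable ℝ U) (μ) :
    (fun q => fderiv ℝ (fun p => U (trev N p)) q (stdir μ)) =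
      fun q => tsgn μ * fderiv ℝ U (trev N q) (stdir μ) := by
  ext q
  have := ((hU (trev N q)).hasFDerivAt.comp q (trev N).hasFDerivAt).fderiv
  rw [show fderiv ℝ (fun p => U (trev N p)) q = _ from this]
  simp [trev_dir]

lemma edens_trev {N : ℕ} {U : ℝ × EuclideanSpace ℝ (Fin N) → ℝ} (hU : Differentiable ℝ U) (q) :
    edens (fun p => U (trev N p)) q = edens U (trev N q) := by
  unfold edens
  refine Finset.sum_congr rfl fun μ _ => ?_
  rw [congrFun (fderiv_trev hU μ) q, mul_pow, sq (tsgn μ), tsgn_sq, one_mul]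

lemma IsWaveSol.trev {N : ℕ} {U : ℝ × EuclideanSpace ℝ (Fin N) → ℝ} (hU : IsWaveSol U) :
    IsWaveSol (fun p => U (trev N p)) := by
  refine ⟨hU.1.comp (_root_.trev N).contDiff, fun p => ?_⟩
  have key : ∀ μ, fderiv ℝ (fun q => fderiv ℝ (fun p => U (_root_.trev N p)) q (stdir μ)) p (stdir μ)
      = fderiv ℝ (fun q => fderiv ℝ U q (stdir μ)) (_root_.trev N p) (stdir μ) := by
    intro μ
    rw [fderiv_trev (smooth_diff hU.1), fderiv_const_mul]
    · have := congrFun (fderiv_trev (smooth_diff (smooth_dir hU.1 (stdir μ))) μ) p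
      rw [_root_.smul_apply, this, smul_eq_mul, ← mul_assoc, tsgn_sq, one_mul]
    · exact ((smooth_diff (smooth_dir hU.1 (stdir μ))).comp (_root_.trev N).differentiable) p
  simp only [key]
  exact hU.2 _

theorem energy_conserved {N : ℕ} {U : ℝ × EuclideanSpace ℝ (Fin N) → ℝ} (hU : IsWaveSol U)
    (s t : ℝ) :
    ∫⁻ x, ENNReal.ofReal (edens U (t, x)) = ∫⁻ x, ENNReal.ofReal (edens U (s, x)) := by
  have key : ∀ s t, s ≤ t → ∫⁻ x, ENNReal.ofReal (edens U (t, x)) =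
      ∫⁻ x, ENNReal.ofReal (edens U (s, x)) := by
    intro s t h
    refine le_antisymm (energy_le_of_le hU h) ?_
    have := energy_le_of_le hU.trev (neg_le_neg h)
    simp only [edens_trev (smooth_diff hU.1)] at this
    simpa [trev] using this
  rcases le_total s t with h | h
  · exact key s t h
  · exact (key t s h).symm

/-- spatial convolution of `g` with a space-time kernel. -/
def cv {N : ℕ} (g : EuclideanSpace ℝ (Fin N) → ℝ) (κ : ℝ × EuclideanSpace ℝ (Fin N) → ℝ)
    (p : ℝ × EuclideanSpace ℝ (Fin N)) : ℝ := ∫ y, g y * κ (p - (0, y))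

lemma cv_eq_set {N : ℕ} (g : EuclideanSpace ℝ (Fin N) → ℝ)
    (κ : ℝ × EuclideanSpace ℝ (Fin N) → ℝ) (p) :
    cv g κ p = ∫ y in tsupport g, g y * κ (p - (0, y)) := by
  unfold cv
  symm
  apply setIntegral_eq_integral_of_forall_compl_eq_zero
  intro y hy
  rw [image_eq_zero_of_notMem_tsupport hy, zero_mul]

lemma cv_hasFDerivAt {N : ℕ} {g : EuclideanSpace ℝ (Fin N) → ℝ} (hg : Continuous g)
    (hgs : HasCompactSupport g)
    {κ : ℝ × EuclideanSpace ℝ (Fin N) → ℝ} (hκ : ContDiff ℝ (⊤ : ℕ∞) κ) (p) :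
    DifferentiableAt ℝ (cv g κ) p ∧ ∀ v, fderiv ℝ (cv g κ) p v = cv g (fun q => fderiv ℝ κ q v) p := by
  have hκ' : Continuous (fderiv ℝ κ) := hκ.continuous_fderiv (by simp)
  have hc' : Continuous (Function.uncurry fun (p : ℝ × EuclideanSpace ℝ (Fin N)) y =>
      g y • fderiv ℝ κ (p - (0, y))) := by
    exact (hg.comp continuous_snd).smul (hκ'.comp
      (by fun_prop : Continuous fun z : (ℝ × EuclideanSpace ℝ (Fin N)) × EuclideanSpace ℝ (Fin N) =>
        z.1 - (0, z.2)))
  have := hasFDerivAt_setIntegral_compact volume (F := fun p y => g y * κ (p - (0, y)))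
    (F' := fun p y => g y • fderiv ℝ κ (p - (0, y))) hgs.isCompact
    (by
      apply Continuous.mul
      · exact hg.comp continuous_snd
      · exact hκ.continuous.comp (by fun_prop))
    hc'
    (fun p y => by
      apply HasFDerivAt.const_mul
      have h1 := (smooth_diff hκ (p - (0, y))).hasFDerivAt
      have h2 : HasFDerivAt (fun q : ℝ × EuclideanSpace ℝ (Fin N) => q - (0, y))
        (ContinuousLinearMap.id ℝ _) p := (hasFDerivAt_id p).sub_const _
      have h3 := HasFDerivAt.comp (g := κ) (f := fun q => q - (0, y)) p h1 h2
      simpa [Function.comp_def] using h3) p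
  have e : cv g κ = fun p => ∫ y in tsupport g, g y * κ (p - (0, y)) := by
    ext p; exact cv_eq_set g κ p
  rw [e]
  refine ⟨this.differentiableAt, fun v => ?_⟩
  rw [this.fderiv, ContinuousLinearMap.integral_apply, cv_eq_set]
  · simp
  · refine ContinuousOn.integrableOn_compact (K := tsupport g) hgs.isCompact ?_
    exact (hc'.comp (by fun_prop : Continuous fun y => (p, y))).continuousOn

lemma cv_fderiv {N : ℕ} {g : EuclideanSpace ℝ (Fin N) → ℝ} (hg : Continuous g)
    (hgs : HasCompactSupport g)
    {κ : ℝ × EuclideanSpace ℝ (Fin N) → ℝ} (hκ : ContDiff ℝ (⊤ : ℕ∞) κ) (v) :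
    (fun p => fderiv ℝ (cv g κ) p v) = cv g (fun q => fderiv ℝ κ q v) := by
  ext p
  exact (cv_hasFDerivAt hg hgs hκ p).2 v

lemma cv_smooth {N : ℕ} {g : EuclideanSpace ℝ (Fin N) → ℝ} (hg : Continuous g)
    (hgs : HasCompactSupport g)
    {κ : ℝ × EuclideanSpace ℝ (Fin N) → ℝ} (hκ : ContDiff ℝ (⊤ : ℕ∞) κ) :
    ContDiff ℝ (⊤ : ℕ∞) (cv g κ) := by
  rw [contDiff_infty]
  intro m
  induction m generalizing κ with
  | zero =>
    have : Differentiable ℝ (cv g κ) := fun p => (cv_hasFDerivAt hg hgs hκ p).1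
    simpa [contDiff_zero] using this.continuous
  | succ m ih =>
    rw [Nat.cast_succ, contDiff_succ_iff_fderiv_apply]
    refine ⟨fun p => (cv_hasFDerivAt hg hgs hκ p).1, by simp, fun v => ?_⟩
    rw [cv_fderiv hg hgs hκ]
    exact ih (smooth_dir hκ v)

lemma cv_const_integrable {N : ℕ} {g : EuclideanSpace ℝ (Fin N) → ℝ} (hg : Continuous g)
    (hgs : HasCompactSupport g)
    {κ : ℝ × EuclideanSpace ℝ (Fin N) → ℝ} (hκ : Continuous κ) (p) :
    Integrable (fun y => g y * κ (p - (0, y))) := by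
  apply Continuous.integrable_of_hasCompactSupport
  · exact hg.mul (hκ.comp (by fun_prop))
  · exact hgs.mul_right

lemma cv_sum {N : ℕ} {g : EuclideanSpace ℝ (Fin N) → ℝ} (hg : Continuous g)
    (hgs : HasCompactSupport g) {ι : Type*} (s : Finset ι)
    {κ : ι → ℝ × EuclideanSpace ℝ (Fin N) → ℝ} (hκ : ∀ i, Continuous (κ i)) (p) :
    cv g (fun q => ∑ i ∈ s, κ i q) p = ∑ i ∈ s, cv g (κ i) p := by
  unfold cv
  simp_rw [Finset.mul_sum]
  exact integral_finsetSum _ fun i _ => cv_const_integrable hg hgs (hκ i) p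

lemma cv_wave {N : ℕ} {g : EuclideanSpace ℝ (Fin N) → ℝ} (hg : Continuous g)
    (hgs : HasCompactSupport g)
    {κ : ℝ × EuclideanSpace ℝ (Fin N) → ℝ} (hκ : IsWaveSol κ) : IsWaveSol (cv g κ) := by
  refine ⟨cv_smooth hg hgs hκ.1, fun p => ?_⟩
  have h2 : ∀ v, fderiv ℝ (fun q => fderiv ℝ (cv g κ) q v) p v =
      cv g (fun q => fderiv ℝ (fun q => fderiv ℝ κ q v) q v) p := by
    intro v
    rw [cv_fderiv hg hgs hκ.1, (cv_hasFDerivAt hg hgs (smooth_dir hκ.1 v) p).2]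
  simp_rw [h2]
  rw [← cv_sum hg hgs]
  · congr 1
    ext q
    exact hκ.2 q
  · exact fun i => (smooth_dir (smooth_dir hκ.1 _) _).continuous

lemma IsWaveSol.dir {N : ℕ} {U : ℝ × EuclideanSpace ℝ (Fin N) → ℝ} (hU : IsWaveSol U) (v) :
    IsWaveSol (fun q => fderiv ℝ U q v) := by
  refine ⟨smooth_dir hU.1 v, fun p => ?_⟩
  have key : ∀ w, fderiv ℝ (fun q => fderiv ℝ (fun q => fderiv ℝ U q v) q w) p w =
      fderiv ℝ (fun q => fderiv ℝ (fun q => fderiv ℝ U q w) q w) p v := by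
    intro w
    have : (fun q => fderiv ℝ (fun q => fderiv ℝ U q v) q w) =
      (fun q => fderiv ℝ (fun q => fderiv ℝ U q w) q v) := by
      ext q; exact smooth_swap hU.1 v w q
    rw [this, smooth_swap (smooth_dir hU.1 w)]
  simp_rw [key]
  have h3 : (fun q => fderiv ℝ (fun q => fderiv ℝ U q (stdir none)) q (stdir none)) =
    fun q => ∑ j, fderiv ℝ (fun q => fderiv ℝ U q (stdir (some j))) q (stdir (some j)) := by
    ext q; exact hU.2 q
  rw [h3, fderiv_fun_sum]
  · simp
  · exact fun i _ => (smooth_diff (smooth_dir (smooth_dir hU.1 _) _)) p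

lemma IsWaveSol.add {N : ℕ} {U V : ℝ × EuclideanSpace ℝ (Fin N) → ℝ} (hU : IsWaveSol U)
    (hV : IsWaveSol V) : IsWaveSol (fun p => U p + V p) := by
  refine ⟨hU.1.add hV.1, fun p => ?_⟩
  have key : ∀ w, fderiv ℝ (fun q => fderiv ℝ (fun p => U p + V p) q w) p w =
      fderiv ℝ (fun q => fderiv ℝ U q w) p w + fderiv ℝ (fun q => fderiv ℝ V q w) p w := by
    intro w
    have : (fun q => fderiv ℝ (fun p => U p + V p) q w) =
        fun q => fderiv ℝ U q w + fderiv ℝ V q w := by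
      ext q
      rw [fderiv_fun_add (smooth_diff hU.1 q) (smooth_diff hV.1 q)]
      simp
    rw [this, fderiv_fun_add (smooth_diff (smooth_dir hU.1 w) p) (smooth_diff (smooth_dir hV.1 w) p)]
    simp
  simp_rw [key, hU.2, hV.2, Finset.sum_add_distrib]

lemma IsWaveSol.sub {N : ℕ} {U V : ℝ × EuclideanSpace ℝ (Fin N) → ℝ} (hU : IsWaveSol U)
    (hV : IsWaveSol V) : IsWaveSol (fun p => U p - V p) := by
  refine ⟨hU.1.sub hV.1, fun p => ?_⟩
  have key : ∀ w, fderiv ℝ (fun q => fderiv ℝ (fun p => U p - V p) q w) p w =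
      fderiv ℝ (fun q => fderiv ℝ U q w) p w - fderiv ℝ (fun q => fderiv ℝ V q w) p w := by
    intro w
    have : (fun q => fderiv ℝ (fun p => U p - V p) q w) =
        fun q => fderiv ℝ U q w - fderiv ℝ V q w := by
      ext q
      rw [fderiv_fun_sub (smooth_diff hU.1 q) (smooth_diff hV.1 q)]
      simp
    rw [this, fderiv_fun_sub (smooth_diff (smooth_dir hU.1 w) p) (smooth_diff (smooth_dir hV.1 w) p)]
    simp
  simp_rw [key, hU.2, hV.2, Finset.sum_sub_distrib]

/-- integration by parts in the convolution -/
lemma cv_ibp {N : ℕ} {g : EuclideanSpace ℝ (Fin N) → ℝ} (hg : ContDiff ℝ (⊤ : ℕ∞) g)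
    (hgs : HasCompactSupport g)
    {κ : ℝ × EuclideanSpace ℝ (Fin N) → ℝ} (hκ : ContDiff ℝ (⊤ : ℕ∞) κ) (p)
    (v : EuclideanSpace ℝ (Fin N)) :
    cv g (fun q => fderiv ℝ κ q (0, v)) p = cv (fun y => fderiv ℝ g y v) κ p := by
  unfold cv
  have hf : ∀ y, HasFDerivAt (fun y => κ (p - (0, y)))
      (-(fderiv ℝ κ (p - (0, y))).comp (ContinuousLinearMap.inr ℝ ℝ (EuclideanSpace ℝ (Fin N)))) y := by
    intro y
    have h1 : HasFDerivAt (fun y : EuclideanSpace ℝ (Fin N) => p - (0, y))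
      (-ContinuousLinearMap.inr ℝ ℝ (EuclideanSpace ℝ (Fin N))) y :=
      (hasFDerivAt_prodMk_right (0 : ℝ) y).const_sub p
    have h3 := HasFDerivAt.comp (g := κ) (f := fun y => p - (0, y)) y
      (smooth_diff hκ (p - (0, y))).hasFDerivAt h1
    simpa [Function.comp_def] using h3
  have hfs : ∀ y, fderiv ℝ (fun y => κ (p - (0, y))) y v = - fderiv ℝ κ (p - (0, y)) (0, v) := by
    intro y; rw [(hf y).fderiv]; simp
  have hcg : Continuous fun y => fderiv ℝ g y v := (smooth_dir hg v).continuous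
  have hcκ : Continuous fun q => fderiv ℝ κ q (0, v) := (smooth_dir hκ _).continuous
  have := integral_mul_fderiv_eq_neg_fderiv_mul_of_integrable (μ := volume)
    (f := g) (g := fun y => κ (p - (0, y))) (v := v)
    (cv_const_integrable hcg (hgs.fderiv_apply ℝ v) hκ.continuous p)
    (by
      simp_rw [hfs, mul_neg]
      exact (cv_const_integrable hg.continuous hgs hcκ p).neg)
    (cv_const_integrable hg.continuous hgs hκ.continuous p)
    (fun y _ => smooth_diff hg y) (fun y _ => (hf y).differentiableAt)
  simp_rw [hfs, mul_neg, integral_neg, neg_inj] at this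
  exact this

/-- complexified coordinates -/
def chi {N : ℕ} (b : ℝ) : Option (Fin N) → ℝ × EuclideanSpace ℝ (Fin N) → ℂ
  | none => fun p => (p.1 : ℂ) - Complex.I * b
  | some j => fun p => (p.2 j : ℂ)

/-- the linear parts of the coordinates -/
def chiL {N : ℕ} : Option (Fin N) → (ℝ × EuclideanSpace ℝ (Fin N)) →L[ℝ] ℂ
  | none => Complex.ofRealCLM.comp (ContinuousLinearMap.fst ℝ ℝ _)
  | some j => Complex.ofRealCLM.comp ((EuclideanSpace.proj j).comp (ContinuousLinearMap.snd ℝ ℝ _))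

/-- signature -/
def eta {N : ℕ} : Option (Fin N) → ℂ
  | none => -1
  | some _ => 1

lemma eta_sq {N : ℕ} (μ : Option (Fin N)) : eta μ * eta μ = 1 := by
  cases μ <;> simp [eta]

lemma chi_hasFDerivAt {N : ℕ} (b : ℝ) (μ : Option (Fin N)) (p) :
    HasFDerivAt (chi b μ) (chiL μ) p := by
  cases μ with
  | none =>
    have := (chiL (N := N) none).hasFDerivAt (x := p)
    exact this.sub_const _
  | some j => exact (chiL (N := N) (some j)).hasFDerivAt (x := p)

lemma chiL_stdir {N : ℕ} (μ ν : Option (Fin N)) :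
    chiL μ (stdir ν) = if μ = ν then 1 else 0 := by
  cases μ <;> cases ν <;> simp [chiL, stdir]
  rename_i i j
  by_cases h : i = j
  · simp [h]
  · simp [h]

lemma chi_smooth {N : ℕ} (b : ℝ) (μ : Option (Fin N)) : ContDiff ℝ (⊤ : ℕ∞) (chi b μ) := by
  cases μ with
  | none => exact (chiL (N := N) none).contDiff.sub contDiff_const
  | some j => exact (chiL (N := N) (some j)).contDiff

/-- the complexified Minkowski form -/
def QQ {N : ℕ} (b : ℝ) (p : ℝ × EuclideanSpace ℝ (Fin N)) : ℂ := ∑ μ, eta μ * chi b μ p ^ 2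

lemma QQ_eq {N : ℕ} (b : ℝ) (p : ℝ × EuclideanSpace ℝ (Fin N)) :
    QQ b p = ((‖p.2‖ ^ 2 : ℝ) : ℂ) - ((p.1 : ℂ) - Complex.I * b) ^ 2 := by
  unfold QQ
  rw [Fintype.sum_option, EuclideanSpace.norm_sq_eq]
  simp [eta, chi]
  ring

lemma QQ_factor {N : ℕ} (b : ℝ) (p : ℝ × EuclideanSpace ℝ (Fin N)) :
    QQ b p = (((‖p.2‖ - p.1 : ℝ) : ℂ) + b * Complex.I) * (((‖p.2‖ + p.1 : ℝ) : ℂ) - b * Complex.I) := by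
  rw [QQ_eq]
  push_cast
  ring

lemma QQ_ne {N : ℕ} {b : ℝ} (hb : 0 < b) (p : ℝ × EuclideanSpace ℝ (Fin N)) : QQ b p ≠ 0 := by
  rw [QQ_factor]
  apply mul_ne_zero
  · intro h
    have := congrArg Complex.im h
    simp at this
    exact hb.ne' this
  · intro h
    have := congrArg Complex.im h
    simp at this
    exact hb.ne' this

lemma QQ_smooth {N : ℕ} (b : ℝ) : ContDiff ℝ (⊤ : ℕ∞) (QQ (N := N) b) := by
  unfold QQ
  exact ContDiff.sum fun μ _ => contDiff_const.mul ((chi_smooth b μ).pow 2)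

lemma QQ_hasFDerivAt {N : ℕ} (b : ℝ) (p : ℝ × EuclideanSpace ℝ (Fin N)) :
    HasFDerivAt (QQ b) (∑ μ, (2 * eta μ * chi b μ p) • chiL μ) p := by
  unfold QQ
  apply HasFDerivAt.fun_sum
  intro μ _
  have := ((chi_hasFDerivAt b μ p).pow 2).const_mul (eta μ)
  refine this.congr_fderiv (ContinuousLinearMap.ext fun v => ?_)
  simp only [_root_.smul_apply, smul_eq_mul, nsmul_eq_mul]
  push_cast
  ring

/-- inverse powers of the quadratic form -/
def QI {N : ℕ} (b : ℝ) (m : ℕ) (p : ℝ × EuclideanSpace ℝ (Fin N)) : ℂ := (QQ b p)⁻¹ ^ m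

lemma QI_smooth {N : ℕ} {b : ℝ} (hb : 0 < b) (m : ℕ) : ContDiff ℝ (⊤ : ℕ∞) (QI (N := N) b m) :=
  ((QQ_smooth b).inv (fun p => QQ_ne hb p)).pow m

lemma QI_hasFDerivAt {N : ℕ} {b : ℝ} (hb : 0 < b) (m : ℕ) (p : ℝ × EuclideanSpace ℝ (Fin N)) :
    HasFDerivAt (QI b m) ((-(m : ℂ) * QI b (m + 1) p) • ∑ μ, (2 * eta μ * chi b μ p) • chiL μ) p := by
  have h1 : HasDerivAt (fun z : ℂ => z⁻¹ ^ m) (-(m : ℂ) * (QQ b p)⁻¹ ^ (m + 1)) (QQ b p) := by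
    refine ((hasDerivAt_inv (QQ_ne hb p)).fun_pow m).congr_deriv ?_
    cases m with
    | zero => simp
    | succ m =>
      have := QQ_ne hb p
      simp only [Nat.add_sub_cancel]
      rw [← inv_pow]
      ring
  have h2 := HasFDerivAt.comp (g := fun z : ℂ => z⁻¹ ^ m) (f := QQ b) p
    (h1.hasFDerivAt.restrictScalars ℝ) (QQ_hasFDerivAt b p)
  have h3 : HasFDerivAt (QI b m) _ p := h2
  refine h3.congr_fderiv (ContinuousLinearMap.ext fun v => ?_)
  simp only [QI, _root_.smul_apply, smul_eq_mul, ContinuousLinearMap.comp_apply,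
    ContinuousLinearMap.coe_restrictScalars', ContinuousLinearMap.toSpanSingleton_apply]
  ring

lemma QI_dir {N : ℕ} {b : ℝ} (hb : 0 < b) (m : ℕ) (p : ℝ × EuclideanSpace ℝ (Fin N)) (ν) :
    fderiv ℝ (QI b m) p (stdir ν) = -(m : ℂ) * QI b (m + 1) p * (2 * eta ν * chi b ν p) := by
  rw [(QI_hasFDerivAt hb m p).fderiv]
  simp only [_root_.smul_apply, _root_.sum_apply, chiL_stdir, smul_eq_mul]
  simp only [mul_ite, mul_one, mul_zero, Finset.sum_ite_eq', Finset.mem_univ, if_true]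

/-- second derivative -/
lemma QI_dir2 {N : ℕ} {b : ℝ} (hb : 0 < b) (m : ℕ) (p : ℝ × EuclideanSpace ℝ (Fin N)) (μ ν) :
    fderiv ℝ (fun q => fderiv ℝ (QI b m) q (stdir ν)) p (stdir μ) =
      4 * m * (m + 1) * eta μ * eta ν * (chi b μ p * chi b ν p * QI b (m + 2) p)
        - (if ν = μ then 2 * m * eta ν else 0) * QI b (m + 1) p := by
  have e : (fun q => fderiv ℝ (QI b m) q (stdir ν)) =
      fun q => -(m : ℂ) * QI b (m + 1) q * (2 * eta ν * chi b ν q) := by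
    ext q; exact QI_dir hb m q ν
  rw [e]
  have h1 := ((QI_hasFDerivAt hb (m + 1) p).const_mul (-(m : ℂ))).fun_mul
    ((chi_hasFDerivAt b ν p).const_mul (2 * eta ν))
  rw [h1.fderiv]
  simp only [_root_.add_apply, _root_.smul_apply, _root_.sum_apply, chiL_stdir, smul_eq_mul]
  simp only [mul_ite, mul_one, mul_zero, Finset.sum_ite_eq', Finset.mem_univ, if_true]
  split_ifs <;> push_cast <;> ring

lemma im_dir {V : Type*} [NormedAddCommGroup V] [NormedSpace ℝ V] {F : V → ℂ}
    (hF : Differentiable ℝ F) (a : ℝ) (v p : V) :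
    fderiv ℝ (fun q => a * (F q).im) p v = a * (fderiv ℝ F p v).im := by
  have h1 := HasFDerivAt.comp (g := Complex.imCLM) (f := F) p Complex.imCLM.hasFDerivAt
    (hF p).hasFDerivAt
  have h2 := h1.const_mul a
  have h3 : HasFDerivAt (fun q => a * (F q).im) (a • (Complex.imCLM ∘L fderiv ℝ F p)) p := h2
  rw [h3.fderiv]
  simp

lemma cdir_smooth {V : Type*} [NormedAddCommGroup V] [NormedSpace ℝ V] {U : V → ℂ}
    (hU : ContDiff ℝ (⊤ : ℕ∞) U) (v : V) :
    ContDiff ℝ (⊤ : ℕ∞) (fun q => fderiv ℝ U q v) :=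
  (hU.fderiv_right (m := (⊤ : ℕ∞)) (by norm_cast)).clm_apply contDiff_const

/-- the fundamental kernel -/
def kk {N : ℕ} (a b : ℝ) (n : ℕ) (p : ℝ × EuclideanSpace ℝ (Fin N)) : ℝ := a * (QI b n p).im

lemma kk_smooth {N : ℕ} (a : ℝ) {b : ℝ} (hb : 0 < b) (n : ℕ) :
    ContDiff ℝ (⊤ : ℕ∞) (kk (N := N) a b n) :=
  contDiff_const.mul (Complex.imCLM.contDiff.comp (QI_smooth hb n))

lemma kk_dir {N : ℕ} (a : ℝ) {b : ℝ} (hb : 0 < b) (n : ℕ) (v) :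
    (fun p => fderiv ℝ (kk (N := N) a b n) p v) = fun p => a * (fderiv ℝ (QI b n) p v).im := by
  ext p
  exact im_dir ((QI_smooth hb n).differentiable (by simp)) a v p

lemma kk_dir2 {N : ℕ} (a : ℝ) {b : ℝ} (hb : 0 < b) (n : ℕ) (v w) :
    (fun p => fderiv ℝ (fun q => fderiv ℝ (kk (N := N) a b n) q v) p w) =
      fun p => a * (fderiv ℝ (fun q => fderiv ℝ (QI b n) q v) p w).im := by
  ext p
  rw [kk_dir a hb]
  exact im_dir ((cdir_smooth (QI_smooth hb n) v).differentiable (by simp)) a w p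

lemma kk_wave {N : ℕ} (a : ℝ) {b : ℝ} (hb : 0 < b) (n : ℕ) (hn : N = 2 * n + 1) :
    IsWaveSol (kk (N := N) a b n) := by
  refine ⟨kk_smooth a hb n, fun p => ?_⟩
  have h : ∀ μ : Option (Fin N), fderiv ℝ (fun q => fderiv ℝ (kk (N := N) a b n) q (stdir μ)) p (stdir μ)
     = a * (fderiv ℝ (fun q => fderiv ℝ (QI b n) q (stdir μ)) p (stdir μ)).im := fun μ =>
     congrFun (kk_dir2 a hb n (stdir μ) (stdir μ)) p
  have hz : ∑ μ : Option (Fin N), eta μ * fderiv ℝ (fun q => fderiv ℝ (QI b n) q (stdir μ)) p (stdir μ) = 0 := by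
    have h1 : ∀ μ : Option (Fin N), eta μ * fderiv ℝ (fun q => fderiv ℝ (QI b n) q (stdir μ)) p (stdir μ)
        = 4 * n * (n + 1) * QI b (n + 2) p * (eta μ * chi b μ p ^ 2) - 2 * n * QI b (n + 1) p := by
      intro μ
      rw [QI_dir2 hb]
      have := eta_sq μ
      simp only [if_true]
      linear_combination (4 * n * (n + 1) * eta μ * (chi b μ p * chi b μ p * QI b (n + 2) p) -
        2 * n * QI b (n + 1) p) * this
    simp_rw [h1]
    rw [Finset.sum_sub_distrib, ← Finset.mul_sum]
    have : QI b (n + 2) p * QQ b p = QI b (n + 1) p := by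
      unfold QI
      rw [pow_succ _ (n + 1), mul_assoc, inv_mul_cancel₀ (QQ_ne hb p), mul_one]
    rw [show ∑ μ, eta μ * chi b μ p ^ 2 = QQ b p from rfl]
    simp only [Finset.sum_const, Finset.card_univ, Fintype.card_option, Fintype.card_fin, nsmul_eq_mul]
    have hN : (N : ℂ) = 2 * n + 1 := by rw [hn]; push_cast; ring
    push_cast
    rw [hN]
    linear_combination (4 * n * (n + 1)) * this
  rw [Fintype.sum_option] at hz
  simp only [h]
  simp only [eta, one_mul, neg_mul, neg_add_eq_zero] at hz
  rw [hz, ← Finset.mul_sum, Complex.im_sum]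

lemma norm_re_im_lower {b : ℝ} (hb : 0 < b) (a : ℝ) (σ : ℝ) (hσ : |σ| = 1) :
    min 1 b / 2 * (1 + |a|) ≤ ‖(a : ℂ) + σ * b * Complex.I‖ := by
  have h1 := Complex.abs_re_le_norm ((a : ℂ) + σ * b * Complex.I)
  have h2 := Complex.abs_im_le_norm ((a : ℂ) + σ * b * Complex.I)
  simp at h1 h2
  rw [hσ, one_mul, abs_of_pos hb] at h2
  have h3 : min 1 b ≤ 1 := min_le_left _ _
  have h4 : min 1 b ≤ b := min_le_right _ _
  nlinarith [abs_nonneg a]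

lemma QQ_lower {N : ℕ} {b : ℝ} (hb : 0 < b) {R : ℝ} (hR : 0 ≤ R) :
    ∃ c > 0, ∀ (t : ℝ) (x y : EuclideanSpace ℝ (Fin N)), ‖y‖ ≤ R →
      c * ((1 + ‖x‖ + |t|) * (1 + abs (‖x‖ - |t|))) ≤ ‖QQ b (t, x - y)‖ := by
  set c0 := min 1 b / 2 with hc0
  have hc0p : 0 < c0 := by have := lt_min one_pos hb; positivity
  refine ⟨c0 ^ 2 / (1 + R) ^ 2, by positivity, fun t x y hy => ?_⟩
  set z := x - y with hz
  have hzx : |‖x‖ - ‖z‖| ≤ R := by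
    have := abs_norm_sub_norm_le x z
    rw [hz, sub_sub_cancel] at this
    exact this.trans hy
  have e1 : c0 * (1 + |‖z‖ - t|) * (c0 * (1 + |‖z‖ + t|)) ≤ ‖QQ b (t, z)‖ := by
    rw [QQ_factor, norm_mul]
    have h1 := norm_re_im_lower hb (‖z‖ - t) 1 (by simp)
    have h2 := norm_re_im_lower hb (‖z‖ + t) (-1) (by simp)
    simp only [Complex.ofReal_one, one_mul, Complex.ofReal_neg, neg_mul] at h1 h2
    rw [← sub_eq_add_neg] at h2
    exact mul_le_mul h1 h2 (by positivity) (norm_nonneg _)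
  have e2 : (1 + |‖z‖ - t|) * (1 + |‖z‖ + t|) = (1 + abs (‖z‖ - |t|)) * (1 + (‖z‖ + |t|)) := by
    have hz0 := norm_nonneg z
    rcases le_total 0 t with h | h
    · rw [abs_of_nonneg h, abs_of_nonneg (by positivity : 0 ≤ ‖z‖ + t)]
    · rw [abs_of_nonpos h, abs_of_nonneg (by linarith : 0 ≤ ‖z‖ - t), sub_neg_eq_add]
      ring
  have e3 : 1 + ‖x‖ + |t| ≤ (1 + R) * (1 + (‖z‖ + |t|)) := by
    have := (abs_le.1 hzx).2
    nlinarith [norm_nonneg z, abs_nonneg t]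
  have e4 : 1 + abs (‖x‖ - |t|) ≤ (1 + R) * (1 + abs (‖z‖ - |t|)) := by
    have : abs (‖x‖ - |t|) ≤ |‖x‖ - ‖z‖| + abs (‖z‖ - |t|) := by
      rw [show ‖x‖ - |t| = (‖x‖ - ‖z‖) + (‖z‖ - |t|) by ring]; exact abs_add_le _ _
    nlinarith [abs_nonneg (‖z‖ - |t|)]
  have e5 := mul_le_mul e3 e4 (by positivity) (by positivity)
  calc c0 ^ 2 / (1 + R) ^ 2 * ((1 + ‖x‖ + |t|) * (1 + abs (‖x‖ - |t|)))
      ≤ c0 ^ 2 / (1 + R) ^ 2 * ((1 + R) * (1 + (‖z‖ + |t|)) * ((1 + R) * (1 + abs (‖z‖ - |t|)))) := by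
        gcongr
    _ = c0 ^ 2 * ((1 + abs (‖z‖ - |t|)) * (1 + (‖z‖ + |t|))) := by field_simp
    _ = c0 * (1 + |‖z‖ - t|) * (c0 * (1 + |‖z‖ + t|)) := by rw [← e2]; ring
    _ ≤ _ := e1

lemma lin_lim (α β : ℂ) : Tendsto (fun w : ℝ => ((w : ℂ) * α + β) * (w : ℂ)⁻¹)
    (Bornology.cobounded ℝ) (nhds α) := by
  have h0 : Tendsto (fun w : ℝ => (w : ℂ)⁻¹) (Bornology.cobounded ℝ) (nhds 0) := by
    have := (Complex.continuous_ofReal.tendsto 0).comp (tendsto_inv₀_cobounded (α := ℝ))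
    simpa [Function.comp_def] using this
  have h1 : Tendsto (fun w : ℝ => α + β * (w : ℂ)⁻¹) (Bornology.cobounded ℝ) (nhds (α + β * 0)) :=
    tendsto_const_nhds.add (tendsto_const_nhds.mul h0)
  rw [mul_zero, add_zero] at h1
  refine h1.congr' ?_
  filter_upwards [Bornology.eventually_ne_cobounded (0 : ℝ)] with w hw
  have : (w : ℂ) ≠ 0 := by exact_mod_cast hw
  field_simp

/-- homogeneous-type kernels of degree `d` -/
def HomB {N : ℕ} (d : ℕ) (P : ℝ × EuclideanSpace ℝ (Fin N) → ℂ) : Prop :=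
  Continuous P ∧
  (∀ R : ℝ, 0 ≤ R → ∃ C : ℝ, 0 ≤ C ∧ ∀ (t : ℝ) (x y : EuclideanSpace ℝ (Fin N)), ‖y‖ ≤ R →
    ‖P (t, x - y)‖ ≤ C * (1 + ‖x‖ + |t|) ^ d) ∧
  (∀ (θ y : EuclideanSpace ℝ (Fin N)) (s : ℝ), ‖θ‖ = 1 → ∃ ℓ : ℂ,
    Tendsto (fun w : ℝ => P (w, (w + s) • θ - y) * ((w : ℂ)⁻¹) ^ d)
      (Bornology.cobounded ℝ) (nhds ℓ))

lemma HomB.one {N : ℕ} : HomB 0 (fun _ : ℝ × EuclideanSpace ℝ (Fin N) => (1 : ℂ)) :=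
  ⟨continuous_const, fun R _ => ⟨1, by simp, by simp⟩, fun θ y s _ => ⟨1, by simp⟩⟩

lemma HomB.mul {N d d' : ℕ} {P P' : ℝ × EuclideanSpace ℝ (Fin N) → ℂ} (h : HomB d P)
    (h' : HomB d' P') : HomB (d + d') (fun p => P p * P' p) := by
  refine ⟨h.1.mul h'.1, fun R hR => ?_, fun θ y s hθ => ?_⟩
  · obtain ⟨C, hC, h1⟩ := h.2.1 R hR
    obtain ⟨C', hC', h1'⟩ := h'.2.1 R hR
    refine ⟨C * C', by positivity, fun t x y hy => ?_⟩
    rw [norm_mul, pow_add, mul_mul_mul_comm]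
    exact mul_le_mul (h1 t x y hy) (h1' t x y hy) (norm_nonneg _) (by positivity)
  · obtain ⟨l, hl⟩ := h.2.2 θ y s hθ
    obtain ⟨l', hl'⟩ := h'.2.2 θ y s hθ
    refine ⟨l * l', (hl.mul hl').congr fun w => ?_⟩
    rw [pow_add]; ring

lemma HomB.chi {N : ℕ} (b : ℝ) (μ : Option (Fin N)) : HomB 1 (chi b μ) := by
  refine ⟨(chi_smooth b μ).continuous, fun R hR => ⟨1 + R + |b|, by positivity, fun t x y hy => ?_⟩,
    fun θ y s hθ => ?_⟩
  · rw [pow_one]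
    have hx := norm_nonneg x
    have ht := abs_nonneg t
    have hb := abs_nonneg b
    cases μ with
    | none =>
      simp only [_root_.chi]
      have : ‖(t : ℂ) - Complex.I * b‖ ≤ |t| + |b| := by
        refine (norm_sub_le _ _).trans ?_
        simp
      nlinarith [mul_nonneg hR hx, mul_nonneg hR ht, mul_nonneg hb hx, mul_nonneg hb ht]
    | some j =>
      simp only [_root_.chi, Complex.norm_real]
      have h1 := PiLp.norm_apply_le (x - y) j
      have h2 := norm_sub_le x y
      nlinarith [mul_nonneg hR hx, mul_nonneg hR ht, mul_nonneg hb hx, mul_nonneg hb ht]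
  · simp only [pow_one]
    cases μ with
    | none =>
      refine ⟨1, (lin_lim 1 (-(Complex.I * b))).congr fun w => ?_⟩
      simp only [_root_.chi]; ring
    | some j =>
      refine ⟨(θ j : ℂ), (lin_lim (θ j) (s * θ j - y j)).congr fun w => ?_⟩
      simp only [_root_.chi, PiLp.sub_apply, PiLp.smul_apply, smul_eq_mul]
      push_cast
      ring

/-- kernels with the decay of outgoing waves -/
def CGood {N : ℕ} (n : ℕ) (F : ℝ × EuclideanSpace ℝ (Fin N) → ℂ) : Prop :=
  Continuous F ∧
  (∀ R : ℝ, 0 ≤ R → ∃ C : ℝ, 0 ≤ C ∧ ∀ (t : ℝ) (x y : EuclideanSpace ℝ (Fin N)), ‖y‖ ≤ R →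
    ‖F (t, x - y)‖ ≤ C * ((1 + ‖x‖ + |t|) ^ n * (1 + abs (‖x‖ - |t|)))⁻¹) ∧
  (∀ (θ y : EuclideanSpace ℝ (Fin N)) (s : ℝ), ‖θ‖ = 1 → ∃ ℓ : ℂ,
    Tendsto (fun w : ℝ => (w : ℂ) ^ n * F (w, (w + s) • θ - y)) (Bornology.cobounded ℝ) (nhds ℓ))

lemma CGood.const_mul {N n : ℕ} {F : ℝ × EuclideanSpace ℝ (Fin N) → ℂ} (h : CGood n F) (c : ℂ) :
    CGood n (fun p => c * F p) := by
  refine ⟨continuous_const.mul h.1, fun R hR => ?_, fun θ y s hθ => ?_⟩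
  · obtain ⟨C, hC, h1⟩ := h.2.1 R hR
    refine ⟨‖c‖ * C, by positivity, fun t x y hy => ?_⟩
    rw [norm_mul, mul_assoc]
    exact mul_le_mul_of_nonneg_left (h1 t x y hy) (norm_nonneg _)
  · obtain ⟨l, hl⟩ := h.2.2 θ y s hθ
    refine ⟨c * l, (hl.const_mul c).congr fun w => by ring⟩

lemma CGood.sub {N n : ℕ} {F G : ℝ × EuclideanSpace ℝ (Fin N) → ℂ} (h : CGood n F)
    (h' : CGood n G) : CGood n (fun p => F p - G p) := by
  refine ⟨h.1.sub h'.1, fun R hR => ?_, fun θ y s hθ => ?_⟩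
  · obtain ⟨C, hC, h1⟩ := h.2.1 R hR
    obtain ⟨C', hC', h1'⟩ := h'.2.1 R hR
    refine ⟨C + C', by positivity, fun t x y hy => ?_⟩
    rw [add_mul]
    exact (norm_sub_le _ _).trans (add_le_add (h1 t x y hy) (h1' t x y hy))
  · obtain ⟨l, hl⟩ := h.2.2 θ y s hθ
    obtain ⟨l', hl'⟩ := h'.2.2 θ y s hθ
    refine ⟨l - l', (hl.sub hl').congr fun w => by ring⟩

lemma QQ_ray {N : ℕ} (b w s : ℝ) (θ y : EuclideanSpace ℝ (Fin N)) (hθ : ‖θ‖ = 1) :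
    QQ b (w, (w + s) • θ - y) = (w : ℂ) * (2 * ((s - inner ℝ θ y : ℝ) + Complex.I * b)) +
      ((‖s • θ - y‖ ^ 2 + b ^ 2 : ℝ) : ℂ) := by
  rw [QQ_eq]
  have : ‖(w + s) • θ - y‖ ^ 2 = w ^ 2 + 2 * w * (s - inner ℝ θ y) + ‖s • θ - y‖ ^ 2 := by
    rw [show (w + s) • θ - y = w • θ + (s • θ - y) by rw [add_smul]; abel, norm_add_sq_real,
      norm_smul, hθ, inner_sub_right, inner_smul_left, inner_smul_left, inner_smul_right,
      real_inner_self_eq_norm_sq, hθ]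
    simp
    ring
  simp only [this]
  push_cast
  linear_combination (-(b : ℂ) ^ 2) * Complex.I_sq

lemma HomB.good {N : ℕ} {b : ℝ} (hb : 0 < b) {n d m : ℕ} (hm : n + d ≤ m) (hm1 : 1 ≤ m)
    {P : ℝ × EuclideanSpace ℝ (Fin N) → ℂ} (h : HomB d P) :
    CGood n (fun p => P p * QI b m p) := by
  refine ⟨h.1.mul (QI_smooth hb m).continuous, fun R hR => ?_, fun θ y s hθ => ?_⟩
  · obtain ⟨C, hC, h1⟩ := h.2.1 R hR
    obtain ⟨c, hc, h2⟩ := QQ_lower (N := N) hb hR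
    refine ⟨C * (c⁻¹) ^ m, by positivity, fun t x y hy => ?_⟩
    have h1 := h1 t x y hy
    have h2 := h2 t x y hy
    set S := 1 + ‖x‖ + |t| with hS
    set D := 1 + abs (‖x‖ - |t|) with hD
    have hS1 : 1 ≤ S := by have := norm_nonneg x; have := abs_nonneg t; rw [hS]; linarith
    have hD1 : 1 ≤ D := by have := abs_nonneg (‖x‖ - |t|); rw [hD]; linarith
    have hQ : ‖QI b m (t, x - y)‖ ≤ ((c * (S * D)) ^ m)⁻¹ := by
      unfold QI
      rw [norm_pow, norm_inv, inv_pow]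
      gcongr
    rw [norm_mul]
    calc _ ≤ C * S ^ d * ((c * (S * D)) ^ m)⁻¹ := mul_le_mul h1 hQ (norm_nonneg _) (by positivity)
      _ = C * (c⁻¹) ^ m * (S ^ d * ((S * D) ^ m)⁻¹) := by rw [mul_pow, mul_inv, inv_pow]; ring
      _ ≤ C * (c⁻¹) ^ m * (S ^ n * D)⁻¹ := by
        apply mul_le_mul_of_nonneg_left _ (by positivity)
        rw [← div_eq_mul_inv, div_le_iff₀ (by positivity), ← div_eq_inv_mul,
          le_div_iff₀ (by positivity)]
        rw [mul_pow, ← mul_assoc, ← pow_add]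
        gcongr
        · omega
        · exact le_self_pow₀ hD1 (by omega)
  · obtain ⟨l, hl⟩ := h.2.2 θ y s hθ
    obtain ⟨e, rfl⟩ := Nat.exists_eq_add_of_le hm
    have hQ := lin_lim (2 * ((s - inner ℝ θ y : ℝ) + Complex.I * b))
      ((‖s • θ - y‖ ^ 2 + b ^ 2 : ℝ) : ℂ)
    have hne : (2 * ((s - inner ℝ θ y : ℝ) + Complex.I * b)) ≠ 0 := by
      intro h0
      have := congrArg Complex.im h0
      simp at this
      exact hb.ne' this
    have h0 := lin_lim 0 1
    have := (hl.mul ((hQ.inv₀ hne).pow (n + d + e))).mul (h0.pow e)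
    refine ⟨_, this.congr' ?_⟩
    filter_upwards [Bornology.eventually_ne_cobounded (0 : ℝ)] with w hw
    have hw' : (w : ℂ) ≠ 0 := by exact_mod_cast hw
    rw [← QQ_ray b w s θ y hθ]
    unfold QI
    rw [mul_inv, inv_inv, mul_pow, mul_zero, zero_add, one_mul]
    have h3 : ((w : ℂ)⁻¹) ^ d * w ^ (n + d + e) * ((w : ℂ)⁻¹) ^ e = w ^ n := by
      rw [pow_add, pow_add, inv_pow, inv_pow]
      field_simp
    rw [← h3]
    ring

/-- functions with radiation-type asymptotics -/
def Rad {N : ℕ} (n : ℕ) (A : ℝ × EuclideanSpace ℝ (Fin N) → ℝ) : Prop :=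
  (∃ C : ℝ, 0 ≤ C ∧ ∀ (t : ℝ) (x : EuclideanSpace ℝ (Fin N)),
    |A (t, x)| ≤ C * ((1 + ‖x‖ + |t|) ^ n * (1 + abs (‖x‖ - |t|)))⁻¹) ∧
  (∀ (θ : EuclideanSpace ℝ (Fin N)) (s : ℝ), ‖θ‖ = 1 → ∃ ℓ : ℝ,
    Tendsto (fun w : ℝ => w ^ n * A (w, (w + s) • θ)) (Bornology.cobounded ℝ) (nhds ℓ))

lemma Rad.add {N n : ℕ} {F G : ℝ × EuclideanSpace ℝ (Fin N) → ℝ} (h : Rad n F)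
    (h' : Rad n G) : Rad n (fun p => F p + G p) := by
  refine ⟨?_, fun θ s hθ => ?_⟩
  · obtain ⟨C, hC, h1⟩ := h.1
    obtain ⟨C', hC', h1'⟩ := h'.1
    refine ⟨C + C', by positivity, fun t x => ?_⟩
    rw [add_mul]
    exact (abs_add_le _ _).trans (add_le_add (h1 t x) (h1' t x))
  · obtain ⟨l, hl⟩ := h.2 θ s hθ
    obtain ⟨l', hl'⟩ := h'.2 θ s hθ
    refine ⟨l + l', (hl.add hl').congr fun w => by ring⟩

lemma cobounded_cg : (Bornology.cobounded ℝ).IsCountablyGenerated := by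
  rw [← comap_norm_atTop]; infer_instance

lemma CGood.rad {N n : ℕ} {F : ℝ × EuclideanSpace ℝ (Fin N) → ℂ} (h : CGood n F) (a : ℝ)
    {g : EuclideanSpace ℝ (Fin N) → ℝ} (hg : Continuous g) (hgs : HasCompactSupport g) :
    Rad n (cv g (fun p => a * (F p).im)) := by
  obtain ⟨R, hR0, hR⟩ : ∃ R : ℝ, 0 ≤ R ∧ ∀ y, R < ‖y‖ → g y = 0 := by
    obtain ⟨R, hR⟩ := hgs.isCompact.isBounded.subset_closedBall (0 : EuclideanSpace ℝ (Fin N))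
    refine ⟨max R 0, le_max_right _ _, fun y hy => ?_⟩
    by_contra hne
    have := hR (subset_tsupport g hne)
    rw [mem_closedBall_zero_iff] at this
    exact absurd (this.trans (le_max_left _ _)) (not_le.2 hy)
  obtain ⟨C, hC, hb⟩ := h.2.1 R hR0
  have hgi : Integrable fun y => |g y| := (hg.integrable_of_hasCompactSupport hgs).abs
  have hκc : Continuous (fun p => a * (F p).im) := continuous_const.mul (Complex.continuous_im.comp h.1)
  have hbd : ∀ (t : ℝ) (x y : EuclideanSpace ℝ (Fin N)), |g y * (a * (F ((t, x) - (0, y))).im)| ≤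
      |g y| * (|a| * C * ((1 + ‖x‖ + |t|) ^ n * (1 + abs (‖x‖ - |t|)))⁻¹) := by
    intro t x y
    rw [abs_mul]
    rcases lt_or_ge R ‖y‖ with hy | hy
    · simp [hR y hy]
    · apply mul_le_mul_of_nonneg_left _ (abs_nonneg _)
      rw [abs_mul, mul_assoc]
      apply mul_le_mul_of_nonneg_left _ (abs_nonneg _)
      have := hb t x y hy
      simp only [Prod.mk_sub_mk, sub_zero]
      exact (Complex.abs_im_le_norm _).trans this
  refine ⟨⟨(∫ y, |g y|) * (|a| * C), ?_, fun t x => ?_⟩, fun θ s hθ => ?_⟩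
  · have : 0 ≤ ∫ y, |g y| := integral_nonneg fun _ => abs_nonneg _
    positivity
  · unfold cv
    refine (abs_integral_le_integral_abs).trans ?_
    rw [mul_assoc, ← integral_mul_const]
    refine integral_mono_of_nonneg (Eventually.of_forall fun _ => abs_nonneg _)
      (hgi.mul_const _) (Eventually.of_forall fun y => hbd t x y)
  · choose l hl using fun y => h.2.2 θ y s hθ
    have := cobounded_cg
    refine ⟨∫ y, g y * (a * (l y).im), ?_⟩
    have e : (fun w : ℝ => w ^ n * cv g (fun p => a * (F p).im) (w, (w + s) • θ)) =
        fun w : ℝ => ∫ y, w ^ n * (g y * (a * (F ((w, (w + s) • θ) - (0, y))).im)) := by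
      ext w
      rw [integral_const_mul]; rfl
    rw [e]
    refine tendsto_integral_filter_of_dominated_convergence (fun y => |g y| * (|a| * C)) ?_ ?_
      (hgi.mul_const _) ?_
    · refine Eventually.of_forall fun w => ?_
      exact ((cv_const_integrable hg hgs hκc _).const_mul _).aestronglyMeasurable
    · refine Eventually.of_forall fun w => Eventually.of_forall fun y => ?_
      rw [Real.norm_eq_abs, abs_mul, abs_pow]
      have h1 := hbd w ((w + s) • θ) y
      set S := 1 + ‖(w + s) • θ‖ + |w| with hS
      set D := 1 + abs (‖(w + s) • θ‖ - |w|) with hD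
      have hS1 : 1 ≤ S := by
        have := norm_nonneg ((w + s) • θ); have := abs_nonneg w; rw [hS]; linarith
      have hSw : |w| ≤ S := by
        have := norm_nonneg ((w + s) • θ); rw [hS]; linarith
      have hD1 : 1 ≤ D := by have := abs_nonneg (‖(w + s) • θ‖ - |w|); rw [hD]; linarith
      calc _ ≤ |w| ^ n * (|g y| * (|a| * C * (S ^ n * D)⁻¹)) := by gcongr
        _ = |g y| * (|a| * C) * (|w| ^ n * (S ^ n * D)⁻¹) := by ring
        _ ≤ |g y| * (|a| * C) * 1 := by
          gcongr
          rw [← div_eq_mul_inv, div_le_one (by positivity)]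
          calc |w| ^ n ≤ S ^ n := by gcongr
            _ ≤ S ^ n * D := le_mul_of_one_le_right (by positivity) hD1
        _ = _ := mul_one _
    · refine Eventually.of_forall fun y => ?_
      have h2 := (Complex.continuous_im.tendsto _).comp (hl y)
      refine ((h2.const_mul a).const_mul (g y)).congr fun w => ?_
      simp only [Function.comp_apply, Prod.mk_sub_mk, sub_zero]
      rw [← Complex.ofReal_pow, Complex.im_ofReal_mul]
      ring

/-- the regularised solution -/
def UU {N : ℕ} (u₀ u₁ : EuclideanSpace ℝ (Fin N) → ℝ) (a b : ℝ) (n : ℕ)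
    (p : ℝ × EuclideanSpace ℝ (Fin N)) : ℝ :=
  cv u₁ (kk a b n) p + cv u₀ (fun q => fderiv ℝ (kk a b n) q (stdir none)) p

lemma UU_wave {N : ℕ} {u₀ u₁ : EuclideanSpace ℝ (Fin N) → ℝ}
    (hu₀ : Continuous u₀) (hu₀s : HasCompactSupport u₀)
    (hu₁ : Continuous u₁) (hu₁s : HasCompactSupport u₁) (a : ℝ) {b : ℝ} (hb : 0 < b) (n : ℕ)
    (hn : N = 2 * n + 1) : IsWaveSol (UU u₀ u₁ a b n) :=
  (cv_wave hu₁ hu₁s (kk_wave a hb n hn)).add (cv_wave hu₀ hu₀s ((kk_wave a hb n hn).dir _))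

lemma UU_dir {N : ℕ} {u₀ u₁ : EuclideanSpace ℝ (Fin N) → ℝ}
    (hu₀ : Continuous u₀) (hu₀s : HasCompactSupport u₀)
    (hu₁ : Continuous u₁) (hu₁s : HasCompactSupport u₁) (a : ℝ) {b : ℝ} (hb : 0 < b) (n : ℕ) (v) :
    (fun p => fderiv ℝ (UU u₀ u₁ a b n) p v) = fun p =>
      cv u₁ (fun q => fderiv ℝ (kk a b n) q v) p +
      cv u₀ (fun q => fderiv ℝ (fun q => fderiv ℝ (kk a b n) q (stdir none)) q v) p := by
  ext p
  have hk := kk_smooth (N := N) a hb n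
  have h1 := cv_hasFDerivAt hu₁ hu₁s hk p
  have h2 := cv_hasFDerivAt hu₀ hu₀s (smooth_dir hk (stdir none)) p
  unfold UU
  rw [fderiv_fun_add h1.1 h2.1, _root_.add_apply, h1.2, h2.2]

lemma UU_rad {N : ℕ} {u₀ u₁ : EuclideanSpace ℝ (Fin N) → ℝ}
    (hu₀ : Continuous u₀) (hu₀s : HasCompactSupport u₀)
    (hu₁ : Continuous u₁) (hu₁s : HasCompactSupport u₁) (a : ℝ) {b : ℝ} (hb : 0 < b) (n : ℕ) (μ) :
    Rad n (fun p => fderiv ℝ (UU u₀ u₁ a b n) p (stdir μ)) := by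
  rw [UU_dir hu₀ hu₀s hu₁ hu₁s a hb, kk_dir a hb, kk_dir2 a hb]
  apply Rad.add
  · apply CGood.rad _ a hu₁ hu₁s
    have := ((HomB.chi b μ).good hb (n := n) (m := n + 1) le_rfl (by omega)).const_mul
      (-(n : ℂ) * (2 * eta μ))
    convert this using 2 with p
    rw [QI_dir hb]; ring
  · apply CGood.rad _ a hu₀ hu₀s
    have h1 := (((HomB.chi b μ).mul (HomB.chi b none)).good hb (n := n) (m := n + 2) le_rfl
      (by omega)).const_mul (4 * n * (n + 1) * eta μ * eta (N := N) none)
    have h2 := ((HomB.one (N := N)).good hb (n := n) (m := n + 1) (by omega) (by omega)).const_mul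
      (if none = μ then 2 * n * eta (N := N) none else 0)
    convert h1.sub h2 using 2 with p
    rw [QI_dir2 hb]; ring

/-- polar coordinates for the lower Lebesgue integral -/
lemma lintegral_polar {N : ℕ} (hN : 0 < N)
    {f : EuclideanSpace ℝ (Fin N) → ENNReal} (hf : Measurable f) :
    ∫⁻ x, f x = ∫⁻ θ : sphere (0 : EuclideanSpace ℝ (Fin N)) 1, (∫⁻ r : ℝ,
      (Ioi (0 : ℝ)).indicator (fun r => ENNReal.ofReal (r ^ (N - 1)) * f (r • θ.1)) r)
        ∂(volume : Measure (EuclideanSpace ℝ (Fin N))).toSphere := by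
  have : Nonempty (Fin N) := ⟨⟨0, hN⟩⟩
  have hd : Module.finrank ℝ (EuclideanSpace ℝ (Fin N)) = N := by simp
  have h0 : ∫⁻ x, f x = ∫⁻ x : ({0}ᶜ : Set (EuclideanSpace ℝ (Fin N))), f x.1
      ∂(volume.comap Subtype.val) := by
    rw [lintegral_subtype_comap (measurableSet_singleton _).compl, restrict_compl_singleton]
  have hmp := (volume : Measure (EuclideanSpace ℝ (Fin N))).measurePreserving_homeomorphUnitSphereProd
  rw [hd] at hmp
  set h := homeomorphUnitSphereProd (EuclideanSpace ℝ (Fin N)) with hh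
  have h1 : ∫⁻ x : ({0}ᶜ : Set (EuclideanSpace ℝ (Fin N))), f x.1 ∂(volume.comap Subtype.val) =
      ∫⁻ z, f ((h.symm z).1) ∂((volume : Measure (EuclideanSpace ℝ (Fin N))).toSphere.prod
        (Measure.volumeIoiPow (N - 1))) := by
    rw [← hmp.lintegral_comp_emb h.measurableEmbedding]
    simp
  rw [h0, h1, lintegral_prod]
  · refine lintegral_congr fun θ => ?_
    unfold Measure.volumeIoiPow
    rw [lintegral_withDensity_eq_lintegral_mul]
    · have e : ∀ r : Ioi (0 : ℝ), ((fun r : Ioi (0 : ℝ) => ENNReal.ofReal (r.1 ^ (N - 1))) *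
          fun r : Ioi (0 : ℝ) => f (h.symm (θ, r)).1) r =
          (fun r : ℝ => ENNReal.ofReal (r ^ (N - 1)) * f (r • θ.1)) r.1 := by
        intro r
        simp [hh, homeomorphUnitSphereProd]
      rw [lintegral_congr e, lintegral_indicator measurableSet_Ioi]
      exact lintegral_subtype_comap measurableSet_Ioi
        (fun r : ℝ => ENNReal.ofReal (r ^ (N - 1)) * f (r • θ.1))
    · fun_prop
    · apply hf.comp
      fun_prop
  · apply Measurable.aemeasurable
    apply hf.comp
    fun_prop

/-- polar coordinates centred on the light cone -/
lemma lintegral_cone {N : ℕ} (hN : 0 < N) (hodd : Even (N - 1))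
    {f : EuclideanSpace ℝ (Fin N) → ENNReal} (hf : Measurable f) {w : ℝ} (hw : w ≠ 0) :
    ∫⁻ x, f x = ∫⁻ z : sphere (0 : EuclideanSpace ℝ (Fin N)) 1 × ℝ,
      {s : ℝ | 0 < w * (w + s)}.indicator
        (fun s => ENNReal.ofReal ((w + s) ^ (N - 1)) * f ((w + s) • z.1.1)) z.2
        ∂((volume : Measure (EuclideanSpace ℝ (Fin N))).toSphere.prod volume) := by
  have hmeasS : MeasurableSet {s : ℝ | 0 < w * (w + s)} :=
    (isOpen_lt continuous_const (by fun_prop)).measurableSet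
  have hm : Measurable (fun z : sphere (0 : EuclideanSpace ℝ (Fin N)) 1 × ℝ =>
      {s : ℝ | 0 < w * (w + s)}.indicator
        (fun s => ENNReal.ofReal ((w + s) ^ (N - 1)) * f ((w + s) • z.1.1)) z.2) := by
    have h1 : Measurable (fun z : sphere (0 : EuclideanSpace ℝ (Fin N)) 1 × ℝ =>
      ENNReal.ofReal ((w + z.2) ^ (N - 1)) * f ((w + z.2) • z.1.1)) := by
      apply Measurable.mul
      · fun_prop
      · apply hf.comp
        fun_prop
    have := h1.indicator (hmeasS.preimage (measurable_snd (α := sphere (0 : EuclideanSpace ℝ (Fin N)) 1)))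
    exact this
  rw [lintegral_prod _ hm.aemeasurable]
  rcases lt_or_gt_of_ne hw with h | h
  · rw [← lintegral_neg_eq_self, lintegral_polar hN (f := fun x => f (-x)) (hf.comp measurable_neg)]
    refine lintegral_congr fun θ => ?_
    rw [← lintegral_sub_left_eq_self _ (-w)]
    refine lintegral_congr fun s => ?_
    have e : (-w - s) ∈ Ioi (0 : ℝ) ↔ s ∈ {s : ℝ | 0 < w * (w + s)} := by
      simp only [mem_Ioi, mem_ofPred_eq]
      constructor
      · intro h1; exact mul_pos_of_neg_of_neg h (by linarith)
      · intro h1; have := neg_of_mul_pos_right h1 h.le; linarith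
    by_cases hs : s ∈ {s : ℝ | 0 < w * (w + s)}
    · rw [indicator_of_mem hs, indicator_of_mem (e.2 hs)]
      rw [show -w - s = -(w + s) by ring, hodd.neg_pow, neg_smul]
      simp
    · rw [indicator_of_notMem hs, indicator_of_notMem (fun hh => hs (e.1 hh))]
  · rw [lintegral_polar hN hf]
    refine lintegral_congr fun θ => ?_
    rw [← lintegral_add_left_eq_self _ w]
    refine lintegral_congr fun s => ?_
    have e : (w + s) ∈ Ioi (0 : ℝ) ↔ s ∈ {s : ℝ | 0 < w * (w + s)} := by
      simp only [mem_Ioi, mem_ofPred_eq]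
      exact (mul_pos_iff_of_pos_left h).symm
    by_cases hs : s ∈ {s : ℝ | 0 < w * (w + s)}
    · rw [indicator_of_mem hs, indicator_of_mem (e.2 hs)]
    · rw [indicator_of_notMem hs, indicator_of_notMem (fun hh => hs (e.1 hh))]

lemma Rad.bound' {N n : ℕ} {A : ℝ × EuclideanSpace ℝ (Fin N) → ℝ} (h : Rad n A) :
    ∃ C : ℝ, 0 ≤ C ∧ ∀ (w s : ℝ) (θ : EuclideanSpace ℝ (Fin N)), ‖θ‖ = 1 → 0 < w * (w + s) →
      ((w + s) ^ n * A (w, (w + s) • θ)) ^ 2 ≤ C * (1 + s ^ 2)⁻¹ := by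
  obtain ⟨C, hC, hb⟩ := h.1
  refine ⟨C ^ 2, by positivity, fun w s θ hθ hws => ?_⟩
  have h1 := hb w ((w + s) • θ)
  have hnorm : ‖(w + s) • θ‖ = |w + s| := by rw [norm_smul, hθ, mul_one, Real.norm_eq_abs]
  rw [hnorm] at h1
  have habs : abs (|w + s| - |w|) = |s| := by
    rcases pos_and_pos_or_neg_and_neg_of_mul_pos hws with ⟨a, b⟩ | ⟨a, b⟩
    · rw [abs_of_pos a, abs_of_pos b]; congr 1; ring
    · rw [abs_of_neg a, abs_of_neg b, ← abs_neg]; congr 1; ring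
  rw [habs] at h1
  have h2 : |(w + s) ^ n * A (w, (w + s) • θ)| ≤ C * (1 + |s|)⁻¹ := by
    rw [abs_mul, abs_pow]
    have hw := abs_nonneg w
    have hws' := abs_nonneg (w + s)
    have hs := abs_nonneg s
    calc _ ≤ |w + s| ^ n * (C * ((1 + |w + s| + |w|) ^ n * (1 + |s|))⁻¹) := by gcongr
      _ = C * (1 + |s|)⁻¹ * (|w + s| ^ n / (1 + |w + s| + |w|) ^ n) := by
        rw [mul_inv]; ring
      _ ≤ C * (1 + |s|)⁻¹ * 1 := by
        gcongr
        rw [div_le_one (by positivity)]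
        gcongr
        linarith
      _ = _ := mul_one _
  rw [← sq_abs]
  calc _ ≤ (C * (1 + |s|)⁻¹) ^ 2 := by gcongr
    _ = C ^ 2 * ((1 + |s|) ^ 2)⁻¹ := by rw [mul_pow, inv_pow]
    _ ≤ _ := by
      gcongr
      nlinarith [abs_nonneg s, sq_abs s]

lemma Rad.lim' {N n : ℕ} {A : ℝ × EuclideanSpace ℝ (Fin N) → ℝ} (h : Rad n A)
    (θ : EuclideanSpace ℝ (Fin N)) (hθ : ‖θ‖ = 1) (s : ℝ) : ∃ ℓ : ℝ,
      Tendsto (fun w : ℝ => (w + s) ^ n * A (w, (w + s) • θ)) (Bornology.cobounded ℝ) (nhds ℓ) := by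
  obtain ⟨l, hl⟩ := h.2 θ s hθ
  have h1 : Tendsto (fun w : ℝ => 1 + s * w⁻¹) (Bornology.cobounded ℝ) (nhds (1 + s * 0)) :=
    tendsto_const_nhds.add (tendsto_const_nhds.mul (tendsto_inv₀_cobounded (α := ℝ)))
  refine ⟨_, ((h1.pow n).mul hl).congr' ?_⟩
  filter_upwards [Bornology.eventually_ne_cobounded (0 : ℝ)] with w hw
  rw [← mul_assoc, ← mul_pow]
  congr 2
  field_simp

theorem rad_limit {N n : ℕ} (hn : N = 2 * n + 1) {U : ℝ × EuclideanSpace ℝ (Fin N) → ℝ}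
    (hU : ContDiff ℝ (⊤ : ℕ∞) U) (hR : ∀ μ, Rad n (fun p => fderiv ℝ U p (stdir μ))) :
    ∃ L : sphere (0 : EuclideanSpace ℝ (Fin N)) 1 × ℝ → ENNReal,
      ∀ (l : Filter ℝ) [l.IsCountablyGenerated], l ≤ Bornology.cobounded ℝ →
      ∀ (Reg : ℝ → Set (EuclideanSpace ℝ (Fin N))) (J : Set ℝ), (∀ w, MeasurableSet (Reg w)) →
      (∀ s : ℝ, s ≠ 0 → ∀ᶠ w in l, 0 < w * (w + s) ∧
        ∀ θ : EuclideanSpace ℝ (Fin N), ‖θ‖ = 1 → ((w + s) • θ ∈ Reg w ↔ s ∈ J)) →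
      Tendsto (fun w => ∫⁻ x in Reg w, ENNReal.ofReal (edens U (w, x))) l
        (nhds (∫⁻ z, J.indicator (fun _ => L z) z.2
          ∂((volume : Measure (EuclideanSpace ℝ (Fin N))).toSphere.prod volume))) := by
  have hN1 : N - 1 = 2 * n := by omega
  choose C hC hb using fun μ => (hR μ).bound'
  choose ℓ hℓ using fun (z : sphere (0 : EuclideanSpace ℝ (Fin N)) 1 × ℝ) μ =>
    (hR μ).lim' z.1.1 (by simp) z.2
  have hexp : ∀ w s θ, (w + s) ^ (N - 1) * edens U (w, (w + s) • θ) =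
      ∑ μ, ((w + s) ^ n * fderiv ℝ U (w, (w + s) • θ) (stdir μ)) ^ 2 := by
    intro w s θ
    unfold edens
    rw [Finset.mul_sum]
    refine Finset.sum_congr rfl fun μ _ => ?_
    rw [mul_pow, ← pow_mul, mul_comm n 2, hN1]
  have hlim : ∀ z : sphere (0 : EuclideanSpace ℝ (Fin N)) 1 × ℝ,
      Tendsto (fun w => (w + z.2) ^ (N - 1) * edens U (w, (w + z.2) • z.1.1))
        (Bornology.cobounded ℝ) (nhds (∑ μ, (ℓ z μ) ^ 2)) := by
    intro z
    simp_rw [hexp]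
    exact tendsto_finsetSum _ fun μ _ => (hℓ z μ).pow 2
  have hbound : ∀ w s θ, ‖θ‖ = 1 → 0 < w * (w + s) →
      (w + s) ^ (N - 1) * edens U (w, (w + s) • θ) ≤ (∑ μ, C μ) * (1 + s ^ 2)⁻¹ := by
    intro w s θ hθ hws
    rw [hexp, Finset.sum_mul]
    exact Finset.sum_le_sum fun μ _ => hb μ w s θ hθ hws
  have hec : Continuous (edens U) := (edens_smooth hU).continuous
  have hev : Even (N - 1) := ⟨n, by omega⟩
  refine ⟨fun z => ENNReal.ofReal (∑ μ, (ℓ z μ) ^ 2), fun l _ hl Reg J hReg hJ => ?_⟩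
  set Φ : ℝ → sphere (0 : EuclideanSpace ℝ (Fin N)) 1 × ℝ → ENNReal := fun w z =>
    {s : ℝ | 0 < w * (w + s)}.indicator (fun s => ENNReal.ofReal ((w + s) ^ (N - 1)) *
      (Reg w).indicator (fun x => ENNReal.ofReal (edens U (w, x))) ((w + s) • z.1.1)) z.2 with hΦ
  have hfm : ∀ w, Measurable ((Reg w).indicator (fun x => ENNReal.ofReal (edens U (w, x)))) := by
    intro w
    apply Measurable.indicator _ (hReg w)
    exact (ENNReal.measurable_ofReal.comp (hec.measurable.comp (by fun_prop)))
  have hne : ∀ᶠ w in l, w ≠ 0 := hl (Bornology.eventually_ne_cobounded (0 : ℝ))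
  have hev1 : ∀ᶠ w in l, ∫⁻ z, Φ w z
      ∂((volume : Measure (EuclideanSpace ℝ (Fin N))).toSphere.prod volume) =
      ∫⁻ x in Reg w, ENNReal.ofReal (edens U (w, x)) := by
    filter_upwards [hne] with w hw
    rw [← lintegral_indicator (hReg w), lintegral_cone (by omega) hev (hfm w) hw]
  refine Tendsto.congr' hev1 ?_
  have hΦm : ∀ w, Measurable (Φ w) := by
    intro w
    have hmeasS : MeasurableSet {s : ℝ | 0 < w * (w + s)} :=
      (isOpen_lt continuous_const (by fun_prop)).measurableSet
    have h1 : Measurable (fun z : sphere (0 : EuclideanSpace ℝ (Fin N)) 1 × ℝ =>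
      ENNReal.ofReal ((w + z.2) ^ (N - 1)) * (Reg w).indicator
        (fun x => ENNReal.ofReal (edens U (w, x))) ((w + z.2) • z.1.1)) := by
      apply Measurable.mul
      · fun_prop
      · apply (hfm w).comp
        fun_prop
    have := h1.indicator (hmeasS.preimage (measurable_snd (α := sphere (0 : EuclideanSpace ℝ (Fin N)) 1)))
    exact this
  have hpw : ∀ w s : ℝ, 0 ≤ (w + s) ^ (N - 1) := fun w s => hev.pow_nonneg _
  refine tendsto_lintegral_filter_of_dominated_convergence
    (fun z => ENNReal.ofReal ((∑ μ, C μ) * (1 + z.2 ^ 2)⁻¹)) (Eventually.of_forall hΦm) ?_ ?_ ?_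
  · refine Eventually.of_forall fun w => Eventually.of_forall fun z => ?_
    simp only [hΦ]
    by_cases hs : z.2 ∈ {s : ℝ | 0 < w * (w + s)}
    · rw [indicator_of_mem hs]
      calc _ ≤ ENNReal.ofReal ((w + z.2) ^ (N - 1)) * ENNReal.ofReal (edens U (w, (w + z.2) • z.1.1)) := by
            gcongr
            exact indicator_le_self _ _ _
        _ = ENNReal.ofReal ((w + z.2) ^ (N - 1) * edens U (w, (w + z.2) • z.1.1)) :=
            (ENNReal.ofReal_mul (hpw _ _)).symm
        _ ≤ _ := ENNReal.ofReal_le_ofReal (hbound w z.2 z.1.1 (by simp) hs)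
    · rw [indicator_of_notMem hs]; exact zero_le
  · have hi : Integrable (fun z : sphere (0 : EuclideanSpace ℝ (Fin N)) 1 × ℝ =>
        (∑ μ, C μ) * (1 + z.2 ^ 2)⁻¹)
        ((volume : Measure (EuclideanSpace ℝ (Fin N))).toSphere.prod volume) :=
      ((integrable_inv_one_add_sq.comp_snd _).const_mul _)
    exact hi.lintegral_lt_top.ne
  · have hae : ∀ᵐ z ∂((volume : Measure (EuclideanSpace ℝ (Fin N))).toSphere.prod
        (volume : Measure ℝ)), z.2 ≠ 0 := by
      have : ∀ᵐ s ∂(volume : Measure ℝ), s ≠ 0 := by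
        rw [ae_iff]; simp
      exact Measure.quasiMeasurePreserving_snd.ae this
    filter_upwards [hae] with z hz
    have h1 := (ENNReal.continuous_ofReal.tendsto _).comp ((hlim z).mono_left hl)
    by_cases hzJ : z.2 ∈ J
    · rw [indicator_of_mem hzJ]
      refine h1.congr' ?_
      filter_upwards [hJ z.2 hz] with w hw
      simp only [hΦ]
      rw [indicator_of_mem (show z.2 ∈ {s : ℝ | 0 < w * (w + s)} from hw.1),
        indicator_of_mem ((hw.2 z.1.1 (by simp)).2 hzJ), ← ENNReal.ofReal_mul (hpw _ _)]
      rfl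
    · rw [indicator_of_notMem hzJ]
      refine tendsto_const_nhds.congr' ?_
      filter_upwards [hJ z.2 hz] with w hw
      simp only [hΦ]
      rw [indicator_of_mem (show z.2 ∈ {s : ℝ | 0 < w * (w + s)} from hw.1),
        indicator_of_notMem (fun hh => hzJ ((hw.2 z.1.1 (by simp)).1 hh)), mul_zero]

/-- the exterior region -/
def extR (N : ℕ) (t : ℝ) : Set (EuclideanSpace ℝ (Fin N)) := {x | |t| ≤ ‖x‖}

lemma extR_meas (N : ℕ) (t : ℝ) : MeasurableSet (extR N t) :=
  (isClosed_le continuous_const continuous_norm).measurableSet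

theorem rad_channel {N n : ℕ} (hn : N = 2 * n + 1) {U : ℝ × EuclideanSpace ℝ (Fin N) → ℝ}
    (hU : IsWaveSol U) (hR : ∀ μ, Rad n (fun p => fderiv ℝ U p (stdir μ))) :
    ∃ A B : ENNReal,
      Tendsto (fun w => ∫⁻ x in extR N w, ENNReal.ofReal (edens U (w, x))) atTop (nhds A) ∧
      Tendsto (fun w => ∫⁻ x in extR N w, ENNReal.ofReal (edens U (w, x))) atBot (nhds B) ∧
      A + B = ∫⁻ x, ENNReal.ofReal (edens U (0, x)) := by
  obtain ⟨L, hL⟩ := rad_limit hn hU.1 hR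
  have htop : (atTop : Filter ℝ) ≤ Bornology.cobounded ℝ := by
    rw [IsOrderBornology.cobounded_eq]; exact le_sup_right
  have hbot : (atBot : Filter ℝ) ≤ Bornology.cobounded ℝ := by
    rw [IsOrderBornology.cobounded_eq]; exact le_sup_left
  have hnorm : ∀ (r : ℝ) (θ : EuclideanSpace ℝ (Fin N)), ‖θ‖ = 1 → ‖r • θ‖ = |r| := by
    intro r θ hθ
    rw [norm_smul, hθ, mul_one, Real.norm_eq_abs]
  have h1 := hL atTop htop (fun w => extR N w) (Ioi 0) (extR_meas N) (by
    intro s hs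
    filter_upwards [eventually_gt_atTop |s|] with w hw
    have h1 := neg_abs_le s
    have h2 := abs_nonneg s
    refine ⟨mul_pos (by linarith) (by linarith), fun θ hθ => ?_⟩
    show |w| ≤ ‖_‖ ↔ _
    rw [hnorm _ _ hθ, abs_of_pos (by linarith), abs_of_pos (by linarith)]
    simp only [mem_Ioi]
    constructor
    · intro h; exact lt_of_le_of_ne (by linarith) (Ne.symm hs)
    · intro h; linarith)
  have h2 := hL atTop htop (fun w => (extR N w)ᶜ) (Iio 0) (fun w => (extR_meas N w).compl) (by
    intro s hs
    filter_upwards [eventually_gt_atTop |s|] with w hw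
    have h1 := neg_abs_le s
    have h2 := abs_nonneg s
    refine ⟨mul_pos (by linarith) (by linarith), fun θ hθ => ?_⟩
    show ¬ (|w| ≤ ‖_‖) ↔ _
    rw [hnorm _ _ hθ, abs_of_pos (by linarith), abs_of_pos (by linarith), not_le]
    simp only [mem_Iio]
    constructor <;> intro h <;> linarith)
  have h3 := hL atBot hbot (fun w => extR N w) (Iio 0) (extR_meas N) (by
    intro s hs
    filter_upwards [eventually_lt_atBot (-|s|)] with w hw
    have h1 := le_abs_self s
    have h2 := abs_nonneg s
    refine ⟨mul_pos_of_neg_of_neg (by linarith) (by linarith), fun θ hθ => ?_⟩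
    show |w| ≤ ‖_‖ ↔ _
    rw [hnorm _ _ hθ, abs_of_neg (by linarith), abs_of_neg (by linarith)]
    simp only [mem_Iio]
    constructor
    · intro h; exact lt_of_le_of_ne (by linarith) hs
    · intro h; linarith)
  refine ⟨_, _, h1, h3, ?_⟩
  have h4 := h1.add h2
  have h5 : ∀ w, (∫⁻ x in extR N w, ENNReal.ofReal (edens U (w, x))) +
      (∫⁻ x in (extR N w)ᶜ, ENNReal.ofReal (edens U (w, x))) =
      ∫⁻ x, ENNReal.ofReal (edens U (0, x)) := by
    intro w
    rw [lintegral_add_compl _ (extR_meas N w), energy_conserved hU 0 w]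
  simp_rw [h5] at h4
  exact tendsto_nhds_unique h4 tendsto_const_nhds

/-- the Poisson profile (not normalised) -/
def JJ {N : ℕ} (n : ℕ) (x : EuclideanSpace ℝ (Fin N)) : ℝ := ((1 + ‖x‖ ^ 2) ^ (n + 1))⁻¹

lemma JJ_cont {N : ℕ} (n : ℕ) : Continuous (JJ (N := N) n) := by
  unfold JJ
  exact Continuous.inv₀ (by fun_prop) (fun x => by positivity)

lemma JJ_pos {N : ℕ} (n : ℕ) (x : EuclideanSpace ℝ (Fin N)) : 0 < JJ n x := by
  unfold JJ; positivity

lemma JJ_le_one {N : ℕ} (n : ℕ) (x : EuclideanSpace ℝ (Fin N)) : JJ n x ≤ 1 := by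
  unfold JJ
  apply inv_le_one_of_one_le₀
  apply one_le_pow₀
  nlinarith [sq_nonneg ‖x‖]

lemma JJ_integrable {N n : ℕ} (hn : N = 2 * n + 1) :
    Integrable (JJ (N := N) n) := by
  have h := integrable_rpow_neg_one_add_norm_sq (E := EuclideanSpace ℝ (Fin N)) (μ := volume)
    (r := 2 * (n + 1)) (by rw [finrank_euclideanSpace, Fintype.card_fin, hn]; push_cast; linarith)
  refine h.congr (Eventually.of_forall fun x => ?_)
  simp only [JJ]
  have e : (-(2 * ((n : ℝ) + 1)) / 2) = -((n + 1 : ℕ) : ℝ) := by push_cast; ring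
  rw [e, Real.rpow_neg (by positivity), Real.rpow_natCast]

lemma JJ_int_pos {N n : ℕ} (hn : N = 2 * n + 1) : 0 < ∫ x, JJ (N := N) n x := by
  rw [integral_pos_iff_support_of_nonneg (fun x => (JJ_pos n x).le) (JJ_integrable hn)]
  have : Function.support (JJ (N := N) n) = univ := by
    ext x; simp [(JJ_pos n x).ne']
  rw [this]
  exact isOpen_univ.measure_pos _ univ_nonempty

/-- Poisson regularisation -/
def PP {N : ℕ} (c b : ℝ) (n : ℕ) (g : EuclideanSpace ℝ (Fin N) → ℝ) (x : EuclideanSpace ℝ (Fin N)) : ℝ :=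
  ∫ y, g y * (c * b * ((‖x - y‖ ^ 2 + b ^ 2) ^ (n + 1))⁻¹)

lemma PP_scale {N n : ℕ} (hn : N = 2 * n + 1) (c : ℝ) {b : ℝ} (hb : 0 < b)
    (g : EuclideanSpace ℝ (Fin N) → ℝ) (x) :
    PP c b n g x = ∫ z, (c * JJ n z) * g (x - b • z) := by
  unfold PP
  rw [← integral_sub_left_eq_self _ volume x]
  have h := Measure.integral_comp_smul (volume : Measure (EuclideanSpace ℝ (Fin N)))
    (fun w => g (x - w) * (c * b * ((‖x - (x - w)‖ ^ 2 + b ^ 2) ^ (n + 1))⁻¹)) b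
  rw [finrank_euclideanSpace, Fintype.card_fin, abs_of_pos (by positivity), smul_eq_mul] at h
  have h2 : ∫ w, g (x - w) * (c * b * ((‖x - (x - w)‖ ^ 2 + b ^ 2) ^ (n + 1))⁻¹) = b ^ N *
     ∫ w, g (x - b • w) * (c * b * ((‖x - (x - b • w)‖ ^ 2 + b ^ 2) ^ (n + 1))⁻¹) := by
    rw [h, mul_inv_cancel_left₀ (by positivity)]
  rw [h2, ← integral_const_mul]
  congr 1
  ext z
  have e : ‖x - (x - b • z)‖ ^ 2 + b ^ 2 = b ^ 2 * (1 + ‖z‖ ^ 2) := by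
    rw [sub_sub_cancel, norm_smul, Real.norm_of_nonneg hb.le]; ring
  rw [e]
  unfold JJ
  subst hn
  have : (1 + ‖z‖ ^ 2) ≠ 0 := by positivity
  rw [mul_pow]
  field_simp
  ring

lemma PP_bound {N n : ℕ} (hn : N = 2 * n + 1) {c : ℝ} (hc : 0 < c)
    {g : EuclideanSpace ℝ (Fin N) → ℝ} (hg : Continuous g) (hgs : HasCompactSupport g) :
    ∃ K, ∀ b, 0 < b → b ≤ 1 → ∀ x, |PP c b n g x| ≤ K * JJ n x := by
  obtain ⟨M, hM⟩ := hgs.exists_bound_of_continuous hg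
  obtain ⟨R, hR⟩ := hgs.isBounded.exists_norm_le
  have hM0 : 0 ≤ M := (norm_nonneg _).trans (hM 0)
  obtain ⟨I, hI⟩ : ∃ I, I = ∫ y, ‖g y‖ := ⟨_, rfl⟩
  have hI0 : 0 ≤ I := hI ▸ integral_nonneg fun y => norm_nonneg _
  obtain ⟨R', hR', hR0⟩ : ∃ R', R ≤ R' ∧ 0 ≤ R' := ⟨|R|, le_abs_self R, abs_nonneg R⟩
  obtain ⟨J, hJ⟩ : ∃ J, J = ∫ z, JJ (N := N) n z := ⟨_, rfl⟩
  have hJ0 : 0 < J := hJ ▸ JJ_int_pos hn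
  refine ⟨c * J * M * (1 + (2 * R' + 1) ^ 2) ^ (n + 1) + c * 8 ^ (n + 1) * I, fun b hb hb1 x => ?_⟩
  rw [add_mul]
  have hJp := JJ_pos n x
  by_cases hx : ‖x‖ ≤ 2 * R' + 1
  · have h1 : |PP c b n g x| ≤ c * J * M := by
      rw [PP_scale hn c hb]
      have := norm_integral_le_of_norm_le ((JJ_integrable hn).const_mul (c * M))
        (f := fun z => (c * JJ n z) * g (x - b • z)) (Eventually.of_forall fun z => by
          rw [norm_mul, Real.norm_of_nonneg (by have := JJ_pos n z; positivity)]
          have h1 := hM (x - b • z)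
          have h2 := JJ_pos n z
          calc c * JJ n z * ‖g (x - b • z)‖ ≤ c * JJ n z * M := by gcongr
            _ = _ := by ring)
      rw [integral_const_mul, ← hJ] at this
      rw [Real.norm_eq_abs] at this
      calc _ ≤ _ := this
        _ = _ := by ring
    have h2 : 1 ≤ (1 + (2 * R' + 1) ^ 2) ^ (n + 1) * JJ n x := by
      unfold JJ
      rw [← div_eq_mul_inv, one_le_div (by positivity)]
      gcongr
    have h3 : 0 ≤ c * 8 ^ (n + 1) * I * JJ n x := by positivity
    have h4 : c * J * M * 1 ≤ c * J * M * ((1 + (2 * R' + 1) ^ 2) ^ (n + 1) * JJ n x) := by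
      gcongr
    linarith
  · push Not at hx
    have h3 : 0 ≤ c * J * M * (1 + (2 * R' + 1) ^ 2) ^ (n + 1) * JJ n x := by positivity
    have h1 : |PP c b n g x| ≤ c * 8 ^ (n + 1) * I * JJ n x := by
      unfold PP
      have hgi : Integrable (fun y => ‖g y‖) := (hg.integrable_of_hasCompactSupport hgs).norm
      have := norm_integral_le_of_norm_le
        (hgi.mul_const (c * 8 ^ (n + 1) * JJ n x))
        (f := fun y => g y * (c * b * ((‖x - y‖ ^ 2 + b ^ 2) ^ (n + 1))⁻¹))
        (Eventually.of_forall fun y => by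
          rw [norm_mul]
          by_cases hy : y ∈ tsupport g
          · apply mul_le_mul_of_nonneg_left _ (norm_nonneg _)
            rw [Real.norm_of_nonneg (by positivity)]
            have hy1 := hR y hy
            have hxy : ‖x‖ / 2 ≤ ‖x - y‖ := by
              have := norm_sub_norm_le x y
              linarith
            have hk : (1 + ‖x‖ ^ 2) / 8 ≤ ‖x - y‖ ^ 2 + b ^ 2 := by
              nlinarith [norm_nonneg x, sq_nonneg b]
            have hk2 : ((‖x - y‖ ^ 2 + b ^ 2) ^ (n + 1))⁻¹ ≤ 8 ^ (n + 1) * JJ n x := by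
              calc _ ≤ (((1 + ‖x‖ ^ 2) / 8) ^ (n + 1))⁻¹ := by gcongr
                _ = _ := by unfold JJ; rw [div_pow]; field_simp
            calc c * b * ((‖x - y‖ ^ 2 + b ^ 2) ^ (n + 1))⁻¹ ≤ c * 1 * (8 ^ (n + 1) * JJ n x) := by
                  gcongr
              _ = _ := by ring
          · rw [image_eq_zero_of_notMem_tsupport hy]; simp)
      rw [integral_mul_const, ← hI] at this
      rw [Real.norm_eq_abs] at this
      calc _ ≤ _ := this
        _ = _ := by ring
    linarith

lemma PP_tendsto {N n : ℕ} (hn : N = 2 * n + 1)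
    {g : EuclideanSpace ℝ (Fin N) → ℝ} (hg : Continuous g) (hgs : HasCompactSupport g)
    {b : ℕ → ℝ} (hb : ∀ k, 0 < b k) (hb0 : Tendsto b atTop (nhds 0)) (x) :
    Tendsto (fun k => PP (∫ z, JJ (N := N) n z)⁻¹ (b k) n g x) atTop (nhds (g x)) := by
  obtain ⟨M, hM⟩ := hgs.exists_bound_of_continuous hg
  obtain ⟨J, hJ⟩ : ∃ J, J = ∫ z, JJ (N := N) n z := ⟨_, rfl⟩
  have hJ0 : 0 < J := hJ ▸ JJ_int_pos hn
  rw [← hJ]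
  have hlim : g x = ∫ z, (J⁻¹ * JJ (N := N) n z) * g x := by
    rw [integral_mul_const, integral_const_mul]
    rw [← hJ, inv_mul_cancel₀ hJ0.ne', one_mul]
  rw [hlim]
  simp_rw [PP_scale hn _ (hb _)]
  apply tendsto_integral_of_dominated_convergence (fun z => J⁻¹ * JJ n z * M)
  · intro k
    exact ((continuous_const.mul (JJ_cont n)).mul (hg.comp (by fun_prop))).aestronglyMeasurable
  · exact ((JJ_integrable hn).const_mul _).mul_const _
  · intro k
    refine Eventually.of_forall fun z => ?_
    have h0 : 0 ≤ J⁻¹ * JJ n z := mul_nonneg (inv_nonneg.2 hJ0.le) (JJ_pos n z).le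
    rw [norm_mul, Real.norm_of_nonneg h0]
    exact mul_le_mul_of_nonneg_left (hM _) h0
  · refine Eventually.of_forall fun z => ?_
    apply Tendsto.const_mul
    have : Tendsto (fun k => x - b k • z) atTop (nhds (x - (0:ℝ) • z)) :=
      tendsto_const_nhds.sub (hb0.smul_const z)
    rw [zero_smul, sub_zero] at this
    exact (hg.tendsto x).comp this

lemma PP_L2 {N n : ℕ} (hn : N = 2 * n + 1)
    {g : EuclideanSpace ℝ (Fin N) → ℝ} (hg : Continuous g) (hgs : HasCompactSupport g)
    {b : ℕ → ℝ} (hb : ∀ k, 0 < b k) (hb1 : ∀ k, b k ≤ 1) (hb0 : Tendsto b atTop (nhds 0))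
    (hm : ∀ k, Continuous (PP (∫ z, JJ (N := N) n z)⁻¹ (b k) n g)) :
    Tendsto (fun k => ∫⁻ x, ENNReal.ofReal ((g x - PP (∫ z, JJ (N := N) n z)⁻¹ (b k) n g x) ^ 2))
      atTop (nhds 0) := by
  have hJ0 : 0 < ∫ z, JJ (N := N) n z := JJ_int_pos hn
  obtain ⟨K, hK⟩ := PP_bound hn (inv_pos.2 hJ0) hg hgs
  have h0 : (0 : ENNReal) = ∫⁻ x : EuclideanSpace ℝ (Fin N), 0 := by simp
  rw [h0]
  have hIntg : Integrable (fun x : EuclideanSpace ℝ (Fin N) => 2 * (K ^ 2 * JJ n x) + 2 * g x ^ 2) := by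
    apply (((JJ_integrable hn).const_mul _).const_mul _).add
    apply Integrable.const_mul
    apply Continuous.integrable_of_hasCompactSupport (hg.pow 2)
    have := hgs.mul_left (f := g)
    simpa [pow_two] using this
  apply tendsto_lintegral_of_dominated_convergence
    (fun x => ENNReal.ofReal (2 * (K ^ 2 * JJ n x) + 2 * g x ^ 2))
  · intro k
    exact (((hg.sub (hm k)).pow 2).measurable).ennreal_ofReal
  · intro k
    refine Eventually.of_forall fun x => ENNReal.ofReal_le_ofReal ?_
    have h1 := hK (b k) (hb k) (hb1 k) x
    set P := PP (∫ z, JJ (N := N) n z)⁻¹ (b k) n g x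
    have h2 : P ^ 2 ≤ (K * JJ n x) ^ 2 := by
      rw [← sq_abs P]; gcongr
    have h3 : (K * JJ n x) ^ 2 ≤ K ^ 2 * JJ n x := by
      rw [mul_pow]
      have := JJ_pos n x
      have := JJ_le_one n x
      gcongr
      nlinarith
    nlinarith [sq_nonneg (g x + P)]
  · have := hIntg.lintegral_lt_top
    exact this.ne
  · refine Eventually.of_forall fun x => ?_
    have h1 := PP_tendsto hn hg hgs hb hb0 x
    have h2 := ENNReal.tendsto_ofReal ((tendsto_const_nhds (x := g x)).sub h1 |>.pow 2)
    simpa using h2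

lemma QI_zero {N : ℕ} (b : ℝ) (m : ℕ) (z : EuclideanSpace ℝ (Fin N)) :
    QI b m (0, z) = ((((‖z‖ ^ 2 + b ^ 2) ^ m)⁻¹ : ℝ) : ℂ) := by
  unfold QI
  rw [QQ_eq]
  have : (((‖z‖ ^ 2 : ℝ) : ℂ) - (((0 : ℝ) : ℂ) - Complex.I * b) ^ 2) = ((‖z‖ ^ 2 + b ^ 2 : ℝ) : ℂ) := by
    push_cast
    ring_nf
    rw [Complex.I_sq]; ring
  simp only [this]
  push_cast
  rw [inv_pow]

lemma kk_t0 {N : ℕ} (a : ℝ) {b : ℝ} (hb : 0 < b) (n : ℕ) (z : EuclideanSpace ℝ (Fin N)) :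
    fderiv ℝ (kk a b n) (0, z) (stdir none) = (-(2 * n * a)) * b * ((‖z‖ ^ 2 + b ^ 2) ^ (n + 1))⁻¹ := by
  rw [congrFun (kk_dir a hb n (stdir none)) (0, z), QI_dir hb, QI_zero]
  have : (-(n : ℂ) * ((((‖z‖ ^ 2 + b ^ 2) ^ (n + 1))⁻¹ : ℝ) : ℂ) * (2 * eta (N := N) none * chi b none (0, z)))
    = ((-(2 * n * b * ((‖z‖ ^ 2 + b ^ 2) ^ (n + 1))⁻¹) : ℝ) : ℂ) * Complex.I := by
    simp [eta, chi]; ring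
  rw [this, Complex.im_ofReal_mul, Complex.I_im]
  ring

lemma kk_j0 {N : ℕ} (a : ℝ) {b : ℝ} (hb : 0 < b) (n : ℕ) (z : EuclideanSpace ℝ (Fin N)) (j) :
    fderiv ℝ (kk a b n) (0, z) (stdir (some j)) = 0 := by
  rw [congrFun (kk_dir a hb n (stdir (some j))) (0, z), QI_dir hb, QI_zero]
  have : (-(n : ℂ) * ((((‖z‖ ^ 2 + b ^ 2) ^ (n + 1))⁻¹ : ℝ) : ℂ) * (2 * eta (some j) * chi b (some j) (0, z)))
    = ((-(2 * n * z j * ((‖z‖ ^ 2 + b ^ 2) ^ (n + 1))⁻¹) : ℝ) : ℂ) := by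
    simp [eta, chi]; ring
  rw [this, Complex.ofReal_im, mul_zero]

lemma kk_tt0 {N : ℕ} (a : ℝ) {b : ℝ} (hb : 0 < b) (n : ℕ) (z : EuclideanSpace ℝ (Fin N)) :
    fderiv ℝ (fun q => fderiv ℝ (kk a b n) q (stdir none)) (0, z) (stdir none) = 0 := by
  rw [congrFun (kk_dir2 a hb n (stdir none) (stdir none)) (0, z), QI_dir2 hb, QI_zero, QI_zero]
  have : ∀ A B : ℝ, (4 * n * (n + 1) * eta (N := N) none * eta (N := N) none * (chi b none ((0 : ℝ), z) * chi b none (0, z) * (A : ℂ))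
        - (if (none : Option (Fin N)) = none then 2 * n * eta (N := N) none else 0) * (B : ℂ))
    = ((-(4 * n * (n + 1) * b ^ 2 * A) + 2 * n * B : ℝ) : ℂ) := by
    intro A B
    simp [eta, chi]
    ring_nf
    rw [Complex.I_sq]; ring
  rw [this, Complex.ofReal_im, mul_zero]

lemma cv_PP {N n : ℕ} (hn0 : 0 < n) (c : ℝ) {b : ℝ} (hb : 0 < b)
    (g : EuclideanSpace ℝ (Fin N) → ℝ) (x) :
    cv g (fun q => fderiv ℝ (kk (-(c / (2 * n))) b n) q (stdir none)) (0, x) = PP c b n g x := by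
  unfold cv PP
  congr 1
  ext y
  have : ((0 : ℝ), x) - (0, y) = (0, x - y) := by simp
  rw [this]
  beta_reduce
  rw [kk_t0 _ hb]
  have : (n : ℝ) ≠ 0 := by positivity
  congr 3
  field_simp

lemma PP_cont {N n : ℕ} (hn0 : 0 < n) (c : ℝ) {b : ℝ} (hb : 0 < b)
    {g : EuclideanSpace ℝ (Fin N) → ℝ} (hg : Continuous g) (hgs : HasCompactSupport g) :
    Continuous (PP c b n g) := by
  have h := (cv_smooth hg hgs (smooth_dir (kk_smooth (N := N) (-(c / (2 * n))) hb n) (stdir none))).continuous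
  have h2 : PP c b n g = fun x => cv g (fun q => fderiv ℝ (kk (-(c / (2 * n))) b n) q (stdir none)) (0, x) := by
    ext x; exact (cv_PP hn0 c hb g x).symm
  rw [h2]
  exact h.comp (by fun_prop)

lemma UU_t0 {N n : ℕ} (hn0 : 0 < n) (c : ℝ) {b : ℝ} (hb : 0 < b)
    {u₀ u₁ : EuclideanSpace ℝ (Fin N) → ℝ}
    (hu₀ : Continuous u₀) (hu₀s : HasCompactSupport u₀)
    (hu₁ : Continuous u₁) (hu₁s : HasCompactSupport u₁) (x) :
    fderiv ℝ (UU u₀ u₁ (-(c / (2 * n))) b n) (0, x) (stdir none) = PP c b n u₁ x := by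
  rw [congrFun (UU_dir hu₀ hu₀s hu₁ hu₁s (-(c / (2 * n))) hb n (stdir none)) (0, x), cv_PP hn0 c hb]
  have : cv u₀ (fun q => fderiv ℝ (fun q => fderiv ℝ (kk (-(c / (2 * n))) b n) q (stdir none)) q (stdir none))
      (0, x) = 0 := by
    unfold cv
    have h : ∀ y, ((0 : ℝ), x) - (0, y) = (0, x - y) := by simp
    simp_rw [h, kk_tt0 _ hb]
    simp
  rw [this, add_zero]

lemma UU_j0 {N n : ℕ} (hn0 : 0 < n) (c : ℝ) {b : ℝ} (hb : 0 < b)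
    {u₀ u₁ : EuclideanSpace ℝ (Fin N) → ℝ}
    (hu₀ : ContDiff ℝ (⊤ : ℕ∞) u₀) (hu₀s : HasCompactSupport u₀)
    (hu₁ : Continuous u₁) (hu₁s : HasCompactSupport u₁) (x) (j) :
    fderiv ℝ (UU u₀ u₁ (-(c / (2 * n))) b n) (0, x) (stdir (some j)) =
      PP c b n (fun y => fderiv ℝ u₀ y (EuclideanSpace.single j 1)) x := by
  rw [congrFun (UU_dir hu₀.continuous hu₀s hu₁ hu₁s (-(c / (2 * n))) hb n (stdir (some j))) (0, x)]
  have : cv u₁ (fun q => fderiv ℝ (kk (-(c / (2 * n))) b n) q (stdir (some j))) (0, x) = 0 := by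
    unfold cv
    have h : ∀ y, ((0 : ℝ), x) - (0, y) = (0, x - y) := by simp
    simp_rw [h, kk_j0 _ hb]
    simp
  rw [this, zero_add, ← cv_PP hn0 c hb]
  exact cv_ibp hu₀ hu₀s (smooth_dir (kk_smooth (N := N) (-(c / (2 * n))) hb n) (stdir none)) (0, x) _

lemma dir_compact {N : ℕ} {g : EuclideanSpace ℝ (Fin N) → ℝ} (hgs : HasCompactSupport g) (v) :
    HasCompactSupport (fun y => fderiv ℝ g y v) := by
  have := hgs.fderiv (𝕜 := ℝ)
  exact this.comp_left (g := fun L : EuclideanSpace ℝ (Fin N) →L[ℝ] ℝ => L v) (by simp)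

/-- approximation by exact Poisson-regularised solutions -/
lemma approx {N n : ℕ} (hn : N = 2 * n + 1) (hn0 : 0 < n)
    {u₀ u₁ : EuclideanSpace ℝ (Fin N) → ℝ}
    (hu₀ : ContDiff ℝ (⊤ : ℕ∞) u₀) (hu₀s : HasCompactSupport u₀)
    (hu₁ : ContDiff ℝ (⊤ : ℕ∞) u₁) (hu₁s : HasCompactSupport u₁)
    {U : ℝ × EuclideanSpace ℝ (Fin N) → ℝ} (hU : IsWaveSol U)
    (ht : ∀ x, fderiv ℝ U (0, x) (stdir none) = u₁ x)
    (hj : ∀ x j, fderiv ℝ U (0, x) (stdir (some j)) = fderiv ℝ u₀ x (EuclideanSpace.single j 1))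
    {ε : ENNReal} (hε : 0 < ε) :
    ∃ V : ℝ × EuclideanSpace ℝ (Fin N) → ℝ, IsWaveSol V ∧
      (∀ μ, Rad n (fun p => fderiv ℝ V p (stdir μ))) ∧
      ∀ t, ∫⁻ x, ENNReal.ofReal (edens (fun p => U p - V p) (t, x)) ≤ ε := by
  set c := (∫ z, JJ (N := N) n z)⁻¹ with hc
  set b : ℕ → ℝ := fun k => 1 / ((k : ℝ) + 1) with hbdef
  have hb : ∀ k, 0 < b k := fun k => by simp only [hbdef]; positivity
  have hb1 : ∀ k, b k ≤ 1 := fun k => by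
    simp only [hbdef]
    rw [div_le_one (by positivity)]
    have : (0 : ℝ) ≤ k := Nat.cast_nonneg k
    linarith
  have hb0 : Tendsto b atTop (nhds 0) := tendsto_one_div_add_atTop_nhds_zero_nat
  have hV : ∀ k, IsWaveSol (UU u₀ u₁ (-(c / (2 * n))) (b k) n) := fun k =>
    UU_wave hu₀.continuous hu₀s hu₁.continuous hu₁s _ (hb k) n hn
  let G : Option (Fin N) → EuclideanSpace ℝ (Fin N) → ℝ := fun μ => match μ with
    | none => u₁
    | some j => fun y => fderiv ℝ u₀ y (EuclideanSpace.single j 1)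
  have hGc : ∀ μ, Continuous (G μ) := fun μ => by
    cases μ with
    | none => exact hu₁.continuous
    | some j => exact (smooth_dir hu₀ _).continuous
  have hGs : ∀ μ, HasCompactSupport (G μ) := fun μ => by
    cases μ with
    | none => exact hu₁s
    | some j => exact dir_compact hu₀s _
  have hed : ∀ k x, edens (fun p => U p - UU u₀ u₁ (-(c / (2 * n))) (b k) n p) (0, x) =
      ∑ μ, (G μ x - PP c (b k) n (G μ) x) ^ 2 := by
    intro k x
    unfold edens
    apply Finset.sum_congr rfl
    intro μ _
    rw [fderiv_fun_sub (smooth_diff hU.1 _) (smooth_diff (hV k).1 _), _root_.sub_apply]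
    cases μ with
    | none => rw [ht, UU_t0 hn0 c (hb k) hu₀.continuous hu₀s hu₁.continuous hu₁s]
    | some j => rw [hj, UU_j0 hn0 c (hb k) hu₀ hu₀s hu₁.continuous hu₁s]
  have hl : ∀ k, ∫⁻ x, ENNReal.ofReal (edens (fun p => U p - UU u₀ u₁ (-(c / (2 * n))) (b k) n p) (0, x))
      = ∑ μ, ∫⁻ x, ENNReal.ofReal ((G μ x - PP c (b k) n (G μ) x) ^ 2) := by
    intro k
    rw [← lintegral_finsetSum']
    · congr 1
      ext x
      rw [hed, ENNReal.ofReal_sum_of_nonneg]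
      intro μ _
      exact sq_nonneg _
    · intro μ _
      exact (((hGc μ).sub (PP_cont hn0 c (hb k) (hGc μ) (hGs μ))).pow 2).measurable.ennreal_ofReal.aemeasurable
  have hlim : Tendsto (fun k => ∑ μ, ∫⁻ x, ENNReal.ofReal ((G μ x - PP c (b k) n (G μ) x) ^ 2))
      atTop (nhds (∑ μ : Option (Fin N), 0)) := by
    apply tendsto_finsetSum
    intro μ _
    exact PP_L2 hn (hGc μ) (hGs μ) hb hb1 hb0 (fun k => PP_cont hn0 c (hb k) (hGc μ) (hGs μ))
  rw [Finset.sum_const_zero] at hlim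
  obtain ⟨k, hk⟩ := (hlim.eventually (gt_mem_nhds hε)).exists
  refine ⟨_, hV k, fun μ => UU_rad hu₀.continuous hu₀s hu₁.continuous hu₁s _ (hb k) n μ, fun t => ?_⟩
  rw [energy_conserved (hU.sub (hV k)) 0 t, hl]
  exact hk.le

lemma exists_lim_of_approx {f : ℝ → ℝ} {l : Filter ℝ} [l.NeBot] {g : ℕ → ℝ → ℝ} {A : ℕ → ℝ} {ε : ℕ → ℝ}
    (hε : Tendsto ε atTop (nhds 0)) (hg : ∀ k, Tendsto (g k) l (nhds (A k)))
    (hfg : ∀ k t, |f t - g k t| ≤ ε k) :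
    ∃ a, Tendsto f l (nhds a) ∧ Tendsto A atTop (nhds a) := by
  have hc : Cauchy (map f l) := by
    rw [Metric.cauchy_iff]
    refine ⟨inferInstance, fun δ hδ => ?_⟩
    obtain ⟨k, hk⟩ := (hε.eventually (gt_mem_nhds (show (0 : ℝ) < δ / 4 by positivity))).exists
    have h2 := (Metric.tendsto_nhds.1 (hg k)) (δ / 4) (by positivity)
    refine ⟨f '' {t | dist (g k t) (A k) < δ / 4}, image_mem_map h2, ?_⟩
    rintro _ ⟨s, hs, rfl⟩ _ ⟨t, ht, rfl⟩
    have h3 := hfg k s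
    have h4 := hfg k t
    rw [mem_ofPred_eq, Real.dist_eq] at hs ht
    rw [Real.dist_eq]
    rw [abs_lt] at *
    rw [abs_le] at *
    constructor <;> linarith
  obtain ⟨a, ha⟩ := cauchy_map_iff_exists_tendsto.1 hc
  refine ⟨a, ha, ?_⟩
  rw [tendsto_iff_dist_tendsto_zero]
  refine squeeze_zero (fun _ => dist_nonneg) (fun k => ?_) hε
  have h := ((ha.sub (hg k)).abs)
  have := le_of_tendsto' h (hfg k)
  rwa [dist_comm, Real.dist_eq]

/-- the space-time gradient as a Euclidean vector -/
def FF {N : ℕ} (U : ℝ × EuclideanSpace ℝ (Fin N) → ℝ) (p : ℝ × EuclideanSpace ℝ (Fin N)) :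
    EuclideanSpace ℝ (Option (Fin N)) := WithLp.toLp 2 fun μ => fderiv ℝ U p (stdir μ)

lemma FF_cont {N : ℕ} {U : ℝ × EuclideanSpace ℝ (Fin N) → ℝ} (hU : ContDiff ℝ (⊤ : ℕ∞) U) (t : ℝ) :
    Continuous (fun x => FF U (t, x)) := by
  unfold FF
  apply (PiLp.continuous_toLp 2 _).comp
  apply continuous_pi
  intro μ
  exact (smooth_dir hU (stdir μ)).continuous.comp (by fun_prop)

lemma FF_enorm {N : ℕ} (U : ℝ × EuclideanSpace ℝ (Fin N) → ℝ) (p) :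
    ‖FF U p‖ₑ ^ (2 : ℝ) = ENNReal.ofReal (edens U p) := by
  have : edens U p = ‖FF U p‖ ^ 2 := by
    rw [EuclideanSpace.norm_sq_eq]
    simp [FF, edens]
  rw [this, ENNReal.ofReal_pow (norm_nonneg _), ofReal_norm]
  norm_cast

/-- square root of the (twice) energy in a region -/
def LL {N : ℕ} (U : ℝ × EuclideanSpace ℝ (Fin N) → ℝ) (t : ℝ) (S : Set (EuclideanSpace ℝ (Fin N))) :
    ENNReal := (∫⁻ x in S, ENNReal.ofReal (edens U (t, x))) ^ (1 / 2 : ℝ)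

lemma LL_eq {N : ℕ} (U : ℝ × EuclideanSpace ℝ (Fin N) → ℝ) (t : ℝ) (S : Set (EuclideanSpace ℝ (Fin N))) :
    LL U t S = eLpNorm (fun x => FF U (t, x)) 2 (volume.restrict S) := by
  rw [eLpNorm_eq_lintegral_rpow_enorm_toReal (by norm_num) (by norm_num)]
  simp only [ENNReal.toReal_ofNat, FF_enorm, LL]

lemma LL_tri {N : ℕ} {U V : ℝ × EuclideanSpace ℝ (Fin N) → ℝ} (hU : ContDiff ℝ (⊤ : ℕ∞) U)
    (hV : ContDiff ℝ (⊤ : ℕ∞) V) (t : ℝ) (S : Set (EuclideanSpace ℝ (Fin N))) :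
    LL U t S ≤ LL V t S + LL (fun p => U p - V p) t S ∧
    LL V t S ≤ LL U t S + LL (fun p => U p - V p) t S := by
  have e : (fun x => FF (fun p => U p - V p) (t, x)) = (fun x => FF U (t, x)) - (fun x => FF V (t, x)) := by
    ext x μ
    simp only [FF, Pi.sub_apply, PiLp.sub_apply]
    rw [fderiv_fun_sub (smooth_diff hU _) (smooth_diff hV _), _root_.sub_apply]
  have hUm : AEStronglyMeasurable (fun x => FF U (t, x)) (volume.restrict S) :=
    (FF_cont hU t).aestronglyMeasurable
  have hVm : AEStronglyMeasurable (fun x => FF V (t, x)) (volume.restrict S) :=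
    (FF_cont hV t).aestronglyMeasurable
  simp only [LL_eq, e]
  constructor
  · have := eLpNorm_add_le hVm (hUm.sub hVm) (p := 2) (by norm_num)
    rwa [add_sub_cancel] at this
  · have := eLpNorm_sub_le hUm (hUm.sub hVm) (p := 2) (by norm_num)
    rwa [sub_sub_cancel] at this

lemma LL_mono {N : ℕ} (U : ℝ × EuclideanSpace ℝ (Fin N) → ℝ) (t : ℝ) (S : Set (EuclideanSpace ℝ (Fin N))) :
    LL U t S ≤ (∫⁻ x, ENNReal.ofReal (edens U (t, x))) ^ (1 / 2 : ℝ) := by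
  unfold LL
  gcongr
  exact Measure.restrict_le_self

lemma toReal_sub_le {x y z : ENNReal} (hy : y ≠ ⊤) (hz : z ≠ ⊤) (h1 : x ≤ y + z) (h2 : y ≤ x + z) :
    |x.toReal - y.toReal| ≤ z.toReal := by
  have hx : x ≠ ⊤ := ne_top_of_le_ne_top (ENNReal.add_ne_top.2 ⟨hy, hz⟩) h1
  have h1' := ENNReal.toReal_mono (ENNReal.add_ne_top.2 ⟨hy, hz⟩) h1
  have h2' := ENNReal.toReal_mono (ENNReal.add_ne_top.2 ⟨hx, hz⟩) h2
  rw [ENNReal.toReal_add hy hz] at h1'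
  rw [ENNReal.toReal_add hx hz] at h2'
  rw [abs_le]; constructor <;> linarith

lemma half_sq (x : ENNReal) : (x ^ (1 / 2 : ℝ)).toReal ^ 2 = x.toReal := by
  rw [← ENNReal.toReal_pow, ← ENNReal.rpow_natCast, ← ENNReal.rpow_mul]
  norm_num

/-- the abstract channel of energy identity -/
lemma channel {N n : ℕ} (hn : N = 2 * n + 1) (hn0 : 0 < n)
    {u₀ u₁ : EuclideanSpace ℝ (Fin N) → ℝ}
    (hu₀ : ContDiff ℝ (⊤ : ℕ∞) u₀) (hu₀s : HasCompactSupport u₀)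
    (hu₁ : ContDiff ℝ (⊤ : ℕ∞) u₁) (hu₁s : HasCompactSupport u₁)
    {U : ℝ × EuclideanSpace ℝ (Fin N) → ℝ} (hU : IsWaveSol U)
    (ht : ∀ x, fderiv ℝ U (0, x) (stdir none) = u₁ x)
    (hj : ∀ x j, fderiv ℝ U (0, x) (stdir (some j)) = fderiv ℝ u₀ x (EuclideanSpace.single j 1))
    (hfin : ∫⁻ x, ENNReal.ofReal (edens U (0, x)) ≠ ⊤) :
    ∃ a b : ℝ, Tendsto (fun t => (∫⁻ x in extR N t, ENNReal.ofReal (edens U (t, x))).toReal) atTop (nhds a) ∧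
      Tendsto (fun t => (∫⁻ x in extR N t, ENNReal.ofReal (edens U (t, x))).toReal) atBot (nhds b) ∧
      a + b = (∫⁻ x, ENNReal.ofReal (edens U (0, x))).toReal := by
  set δ : ℕ → ℝ := fun k => 1 / ((k : ℝ) + 1) with hδdef
  have hδ : ∀ k, 0 < δ k := fun k => by simp only [hδdef]; positivity
  have hδ0 : Tendsto δ atTop (nhds 0) := tendsto_one_div_add_atTop_nhds_zero_nat
  have happ := fun k => approx hn hn0 hu₀ hu₀s hu₁ hu₁s hU ht hj
    (ε := ENNReal.ofReal (δ k ^ 2)) (by have := hδ k; simp; positivity)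
  choose V hVw hVr hVe using happ
  choose A B hA hB hAB using fun k => rad_channel hn (hVw k) (hVr k)
  have hhalf : ∀ k, (ENNReal.ofReal (δ k ^ 2)) ^ (1 / 2 : ℝ) = ENNReal.ofReal (δ k) := by
    intro k
    rw [ENNReal.ofReal_rpow_of_nonneg (sq_nonneg _) (by norm_num), ← Real.sqrt_eq_rpow,
      Real.sqrt_sq (hδ k).le]
  have hD : ∀ k t S, LL (fun p => U p - V k p) t S ≤ ENNReal.ofReal (δ k) := by
    intro k t S
    refine (LL_mono _ t S).trans ?_
    rw [← hhalf]
    exact ENNReal.rpow_le_rpow (hVe k t) (by norm_num)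
  have hUfin : ∀ t S, LL U t S ≠ ⊤ := by
    intro t S
    refine ne_top_of_le_ne_top ?_ (LL_mono _ t S)
    rw [energy_conserved hU 0 t]
    exact ENNReal.rpow_ne_top_of_nonneg (by norm_num) hfin
  have hVfin : ∀ k t S, LL (V k) t S ≠ ⊤ := fun k t S =>
    ne_top_of_le_ne_top (ENNReal.add_ne_top.2 ⟨hUfin t S, ne_top_of_le_ne_top ENNReal.ofReal_ne_top (hD k t S)⟩)
      (LL_tri hU.1 (hVw k).1 t S).2
  have hdiff : ∀ k t S, |(LL U t S).toReal - (LL (V k) t S).toReal| ≤ δ k := by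
    intro k t S
    refine (toReal_sub_le (hVfin k t S) (ne_top_of_le_ne_top ENNReal.ofReal_ne_top (hD k t S))
      (LL_tri hU.1 (hVw k).1 t S).1 (LL_tri hU.1 (hVw k).1 t S).2).trans ?_
    have := ENNReal.toReal_mono ENNReal.ofReal_ne_top (hD k t S)
    rwa [ENNReal.toReal_ofReal (hδ k).le] at this
  have hEk : ∀ k, ∫⁻ x, ENNReal.ofReal (edens (V k) (0, x)) ≠ ⊤ := by
    intro k h
    have := hVfin k 0 univ
    apply this
    rw [LL, Measure.restrict_univ, h]
    exact ENNReal.top_rpow_of_pos (by norm_num)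
  have hAf : ∀ k, A k ≠ ⊤ := fun k => (ENNReal.add_ne_top.1 ((hAB k) ▸ hEk k)).1
  have hBf : ∀ k, B k ≠ ⊤ := fun k => (ENNReal.add_ne_top.1 ((hAB k) ▸ hEk k)).2
  have conv : ∀ (l : Filter ℝ) (k) (C : ENNReal), C ≠ ⊤ →
      Tendsto (fun w => ∫⁻ x in extR N w, ENNReal.ofReal (edens (V k) (w, x))) l (nhds C) →
      Tendsto (fun w => (LL (V k) w (extR N w)).toReal) l (nhds (C ^ (1 / 2 : ℝ)).toReal) := by
    intro l k C hC h
    exact (ENNReal.tendsto_toReal (ENNReal.rpow_ne_top_of_nonneg (by norm_num) hC)).comp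
      ((ENNReal.continuous_rpow_const.tendsto C).comp h)
  obtain ⟨a, ha, hAa⟩ := exists_lim_of_approx (f := fun t => (LL U t (extR N t)).toReal) hδ0
    (fun k => conv atTop k (A k) (hAf k) (hA k)) (fun k t => hdiff k t _)
  obtain ⟨b, hb, hBb⟩ := exists_lim_of_approx (f := fun t => (LL U t (extR N t)).toReal) hδ0
    (fun k => conv atBot k (B k) (hBf k) (hB k)) (fun k t => hdiff k t _)
  have hE : Tendsto (fun k => (LL (V k) 0 univ).toReal) atTop (nhds (LL U 0 univ).toReal) := by
    rw [tendsto_iff_dist_tendsto_zero]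
    refine squeeze_zero (fun _ => dist_nonneg) (fun k => ?_) hδ0
    rw [dist_comm, Real.dist_eq]
    exact hdiff k 0 univ
  refine ⟨a ^ 2, b ^ 2, ?_, ?_, ?_⟩
  · exact (ha.pow 2).congr fun t => half_sq _
  · exact (hb.pow 2).congr fun t => half_sq _
  · have h1 := (hAa.pow 2).add (hBb.pow 2)
    have h2 := hE.pow 2
    have e : ∀ k, ((A k) ^ (1 / 2 : ℝ)).toReal ^ 2 + ((B k) ^ (1 / 2 : ℝ)).toReal ^ 2 =
        (LL (V k) 0 univ).toReal ^ 2 := by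
      intro k
      rw [half_sq, half_sq, LL, half_sq, ← ENNReal.toReal_add (hAf k) (hBf k), hAB, Measure.restrict_univ]
    have := tendsto_nhds_unique (h1.congr e) h2
    rw [this, LL, half_sq, Measure.restrict_univ]

lemma gradient_sq {N : ℕ} (f : EuclideanSpace ℝ (Fin N) → ℝ) (x) :
    ‖gradient f x‖ ^ 2 = ∑ j, (fderiv ℝ f x (EuclideanSpace.single j 1)) ^ 2 := by
  rw [EuclideanSpace.norm_sq_eq]
  apply Finset.sum_congr rfl
  intro j _
  have : fderiv ℝ f x (EuclideanSpace.single j 1) = gradient f x j := by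
    unfold gradient
    rw [← InnerProductSpace.toDual_symm_apply (𝕜 := ℝ) (y := fderiv ℝ f x)]
    rw [EuclideanSpace.inner_single_right]
    simp
  rw [this, Real.norm_eq_abs, sq_abs]

/-- Proposition 2.7 (smooth compactly supported data): the exterior energies at `±∞`
exist and add up to the total energy of the data. -/
theorem stmt11 (N : ℕ) (hN : 3 ≤ N) (hodd : Odd N)
    (u₀ u₁ : EuclideanSpace ℝ (Fin N) → ℝ)
    (hu₀ : ContDiff ℝ (⊤ : ℕ∞) u₀) (hu₀s : HasCompactSupport u₀)
    (hu₁ : ContDiff ℝ (⊤ : ℕ∞) u₁) (hu₁s : HasCompactSupport u₁)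
    (u : ℝ → EuclideanSpace ℝ (Fin N) → ℝ)
    (hu : ContDiff ℝ (⊤ : ℕ∞) (fun p : ℝ × EuclideanSpace ℝ (Fin N) => u p.1 p.2))
    (hwave : ∀ t x, deriv (fun s => deriv (fun r => u r x) s) t = ∑ j, d2 (u t) j x)
    (hinit0 : ∀ x, u 0 x = u₀ x)
    (hinit1 : ∀ x, deriv (fun s => u s x) 0 = u₁ x) :
    ∃ Eplus Eminus : ℝ,
      Tendsto (fun t : ℝ =>
          (1 / 2) * ∫ x in {x : EuclideanSpace ℝ (Fin N) | |t| ≤ ‖x‖},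
            (‖gradient (u t) x‖ ^ 2 + (deriv (fun s => u s x) t) ^ 2))
        atTop (nhds Eplus)
      ∧ Tendsto (fun t : ℝ =>
          (1 / 2) * ∫ x in {x : EuclideanSpace ℝ (Fin N) | |t| ≤ ‖x‖},
            (‖gradient (u t) x‖ ^ 2 + (deriv (fun s => u s x) t) ^ 2))
        atBot (nhds Eminus)
      ∧ Eplus + Eminus
          = (1 / 2) * (∫ x, ‖gradient u₀ x‖ ^ 2) + (1 / 2) * (∫ x, u₁ x ^ 2) := by
  obtain ⟨n, hn⟩ := hodd
  have hn0 : 0 < n := by omega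
  set U : ℝ × EuclideanSpace ℝ (Fin N) → ℝ := fun p => u p.1 p.2 with hUdef
  have hUd : Differentiable ℝ U := smooth_diff hu
  have hdt : ∀ t x, deriv (fun s => u s x) t = fderiv ℝ U (t, x) (stdir none) := fun t x =>
    (deriv_slice hUd t x).deriv
  have hdj : ∀ t x j, fderiv ℝ (u t) x (EuclideanSpace.single j 1) = fderiv ℝ U (t, x) (stdir (some j)) :=
    fun t x j => fderiv_slice hUd t x _
  have hU : IsWaveSol U := by
    refine ⟨hu, fun p => ?_⟩
    have h := hwave p.1 p.2
    have h1 : deriv (fun s => deriv (fun r => u r p.2) s) p.1 =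
        fderiv ℝ (fun q => fderiv ℝ U q (stdir none)) p (stdir none) := by
      simp_rw [hdt]
      exact (deriv_slice (smooth_diff (smooth_dir hu (stdir none))) p.1 p.2).deriv
    have h2 : ∀ j, d2 (u p.1) j p.2 =
        fderiv ℝ (fun q => fderiv ℝ U q (stdir (some j))) p (stdir (some j)) := by
      intro j
      unfold d2
      simp_rw [hdj]
      exact fderiv_slice (smooth_diff (smooth_dir hu (stdir (some j)))) p.1 p.2 _
    rw [h1] at h
    simp_rw [h2] at h
    exact h
  have hu0 : u 0 = u₀ := funext hinit0
  have ht : ∀ x, fderiv ℝ U (0, x) (stdir none) = u₁ x := fun x => by rw [← hdt, hinit1]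
  have hj : ∀ x j, fderiv ℝ U (0, x) (stdir (some j)) = fderiv ℝ u₀ x (EuclideanSpace.single j 1) :=
    fun x j => by rw [← hdj, hu0]
  have hed : ∀ t x, ‖gradient (u t) x‖ ^ 2 + (deriv (fun s => u s x) t) ^ 2 = edens U (t, x) := by
    intro t x
    rw [gradient_sq, edens, Fintype.sum_option, add_comm, hdt]
    simp_rw [hdj]
  have hed0 : ∀ x, edens U (0, x) = ‖gradient u₀ x‖ ^ 2 + u₁ x ^ 2 := by
    intro x
    rw [← hed, hinit1, hu0]
  have hcomp : ∀ g : EuclideanSpace ℝ (Fin N) → ℝ, Continuous g → HasCompactSupport g →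
      Integrable (fun x => g x ^ 2) := by
    intro g hg hgs
    apply Continuous.integrable_of_hasCompactSupport (hg.pow 2)
    have := hgs.mul_left (f := g)
    simpa [pow_two] using this
  have hi1 : Integrable (fun x => u₁ x ^ 2) := hcomp u₁ hu₁.continuous hu₁s
  have hi0 : Integrable (fun x => ‖gradient u₀ x‖ ^ 2) := by
    simp_rw [gradient_sq]
    apply integrable_finsetSum
    intro j _
    exact hcomp _ (smooth_dir hu₀ _).continuous (dir_compact hu₀s _)
  have hfin : ∫⁻ x, ENNReal.ofReal (edens U (0, x)) ≠ ⊤ := by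
    simp_rw [hed0]
    exact (hi0.add hi1).lintegral_lt_top.ne
  obtain ⟨a, b, ha, hb, hab⟩ := channel hn hn0 hu₀ hu₀s hu₁ hu₁s hU ht hj hfin
  have hconv : ∀ t, ∫ x in {x : EuclideanSpace ℝ (Fin N) | |t| ≤ ‖x‖},
            (‖gradient (u t) x‖ ^ 2 + (deriv (fun s => u s x) t) ^ 2) =
       (∫⁻ x in extR N t, ENNReal.ofReal (edens U (t, x))).toReal := by
    intro t
    simp_rw [hed]
    apply integral_eq_lintegral_of_nonneg_ae
    · exact Eventually.of_forall fun x => edens_nonneg U _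
    · have : Continuous (fun x => edens U (t, x)) := by
        unfold edens
        apply continuous_finsetSum
        intro μ _
        exact ((smooth_dir hu (stdir μ)).continuous.comp (by fun_prop)).pow 2
      exact this.aestronglyMeasurable
  have hE : (∫⁻ x, ENNReal.ofReal (edens U (0, x))).toReal =
      (∫ x, ‖gradient u₀ x‖ ^ 2) + ∫ x, u₁ x ^ 2 := by
    rw [← integral_add hi0 hi1]
    simp_rw [hed0]
    symm
    apply integral_eq_lintegral_of_nonneg_ae
    · exact Eventually.of_forall fun x => by positivity
    · exact (hi0.add hi1).aestronglyMeasurable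
  simp_rw [hconv]
  refine ⟨(1 / 2) * a, (1 / 2) * b, ha.const_mul _, hb.const_mul _, ?_⟩
  rw [← mul_add, hab, hE, mul_add]

end
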